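/- arXiv:1705.04426 — 2 statements merged into one kernel-verified Lean document; each statement's English description precedes it below -/
import Mathlib

section
/- Let n ≥ 2 be an integer, p ≥ n a real number, K ⊂ ℝⁿ a compact set, and let 𝒜 satisfy conditions (v)–(viii) as in the context with constants Γ ≥ γ > 0. Let f : ℝⁿ\K → ℝ be such that f is integrable on ℝⁿ\U for every open set U with K ⊂ U. Let u : ℝⁿ\K → ℝ be bounded, differentiable on ℝⁿ\K with |∇u|^p locally integrable, and a weak solution of −div 𝒜(x,∇u) = f in ℝⁿ\K, i.e. ∫ ⟨𝒜(x,∇u(x)), ∇ψ(x)⟩ dx = ∫ f(x) ψ(x) dx for every Lipschitz ψ : ℝⁿ → ℝ with compact support contained in ℝⁿ\K. Then for every open set U with K ⊂ U one has |∇u| ∈ L^p(ℝⁿ\U). -/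
open Real MeasureTheory Set
open scoped RealInnerProductSpace NNReal

/-!
The equation is tested with `u * φ ^ p`, where `φ` is a cutoff with compact support in `ℝⁿ \ K`.

Integrating the derivative of `𝒜 x` along the ray through `η` turns the structure conditions into
the growth bound `‖𝒜 x η‖ ≤ Γ ‖η‖ ^ (p - 1)` (`norm_le_of_fderiv_le`) and the coercivity
`⟪𝒜 x η, η⟫ ≥ c ‖η‖ ^ p` (`coercive_of_le_fderiv`). With these, the choice of test function and
Young's inequality yield the Caccioppoli estimate (`caccioppoli`)
`∫ φ ^ p |∇u| ^ p ≤ C (1 + ∫ |∇φ| ^ p)`, where `C` depends on `sup |u|` and on the integral of `|f|`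
away from a neighborhood of `K`. Since `p ≥ n`, the cutoffs can be taken to be one outside `U` on
balls of radius `R → ∞` while `∫ |∇φ| ^ p` stays bounded (`exists_cutoff`), because the energy of a
bump dilated by `R` scales like `R ^ (n - p)`. Monotone exhaustion by balls then gives the claim.

The function `u * φ ^ p` need not be Lipschitz: `u` is only differentiable, with `|∇u| ^ p` locally
integrable. It is therefore mollified. The convolution of an everywhere differentiable function
having locally integrable gradient with a smooth kernel has as gradient the mollified gradient
(`hasGradientAt_convolution`), and the mollified equations pass to the limit by a dominated
convergence theorem with varying majorants (`weak_formulation_extend`).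
-/

namespace Stmt14

open Filter Topology Metric ContinuousLinearMap
open scoped Convolution

/-! ### Dominated convergence and mollification -/

/-- Pratt's dominated convergence theorem: the dominating functions may vary, provided they
converge almost everywhere and their integrals converge to the integral of the limit. -/
theorem tendsto_integral_of_dominated_of_tendsto {α : Type*} [MeasurableSpace α] {μ : Measure α}
    {d h : ℕ → α → ℝ} {d₀ h₀ : α → ℝ}
    (hd : ∀ k, AEStronglyMeasurable (d k) μ) (hh : ∀ k, Integrable (h k) μ)
    (hh₀ : Integrable h₀ μ) (hdh : ∀ k, ∀ᵐ x ∂μ, |d k x| ≤ h k x)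
    (hdlim : ∀ᵐ x ∂μ, Tendsto (fun k => d k x) atTop (𝓝 (d₀ x)))
    (hhlim : ∀ᵐ x ∂μ, Tendsto (fun k => h k x) atTop (𝓝 (h₀ x)))
    (hhint : Tendsto (fun k => ∫ x, h k x ∂μ) atTop (𝓝 (∫ x, h₀ x ∂μ))) :
    Tendsto (fun k => ∫ x, d k x ∂μ) atTop (𝓝 (∫ x, d₀ x ∂μ)) := by
  have habs : ∀ᵐ x ∂μ, |d₀ x| ≤ h₀ x := by
    filter_upwards [hdlim, hhlim, ae_all_iff.2 hdh] with x h1 h2 h3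
    exact le_of_tendsto_of_tendsto' h1.abs h2 h3
  -- `e k` is `d k` truncated to the interval `[-h₀, h₀]`.
  set e : ℕ → α → ℝ := fun k x => max (min (d k x) (h₀ x)) (-h₀ x) with he
  have hem : ∀ k, AEStronglyMeasurable (e k) μ := fun k =>
    ((hd k).inf hh₀.aestronglyMeasurable).sup hh₀.aestronglyMeasurable.neg
  have hebd : ∀ k, ∀ᵐ x ∂μ, ‖e k x‖ ≤ h₀ x := by
    intro k
    filter_upwards [habs] with x hx
    have h0 : 0 ≤ h₀ x := (abs_nonneg _).trans hx
    rw [Real.norm_eq_abs, abs_le]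
    exact ⟨le_max_right _ _, max_le (min_le_right _ _) (by linarith)⟩
  have hdi : ∀ k, Integrable (d k) μ := fun k => (hh k).mono' (hd k) (hdh k)
  have hei : ∀ k, Integrable (e k) μ := fun k => hh₀.mono' (hem k) (hebd k)
  have h1 : Tendsto (fun k => ∫ x, e k x ∂μ) atTop (𝓝 (∫ x, d₀ x ∂μ)) := by
    refine tendsto_integral_of_dominated_convergence h₀ hem hh₀ hebd ?_
    filter_upwards [hdlim, habs] with x hx hx'
    have : d₀ x = max (min (d₀ x) (h₀ x)) (-h₀ x) := by
      rw [min_eq_left (le_of_abs_le hx'), max_eq_left (neg_le_of_abs_le hx')]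
    rw [this]
    exact (hx.min tendsto_const_nhds).max tendsto_const_nhds
  have hpos : Tendsto (fun k => ∫ x, max (h₀ x - h k x) 0 ∂μ) atTop (𝓝 0) := by
    have : Tendsto (fun k => ∫ x, max (h₀ x - h k x) 0 ∂μ) atTop (𝓝 (∫ _, (0 : ℝ) ∂μ)) := by
      refine tendsto_integral_of_dominated_convergence h₀
        (fun k => ((hh₀.sub (hh k)).pos_part).aestronglyMeasurable) hh₀ ?_ ?_
      · intro k
        filter_upwards [habs, hdh k] with x hx hx'
        have a1 := (abs_nonneg _).trans hx
        have a2 := (abs_nonneg _).trans hx'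
        rw [Real.norm_eq_abs, abs_of_nonneg (le_max_right _ _)]
        exact max_le (by linarith) a1
      · filter_upwards [hhlim] with x hx
        have := (tendsto_const_nhds (x := h₀ x)).sub hx |>.max (tendsto_const_nhds (x := (0 : ℝ)))
        simpa using this
    simpa using this
  have h2 : Tendsto (fun k => ∫ x, max (h k x - h₀ x) 0 ∂μ) atTop (𝓝 0) := by
    have h3 : ∀ k, ∫ x, max (h k x - h₀ x) 0 ∂μ
        = ∫ x, max (h₀ x - h k x) 0 ∂μ + (∫ x, h k x ∂μ - ∫ x, h₀ x ∂μ) := by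
      intro k
      have j : Integrable (fun x => max (h₀ x - h k x) 0) μ := (hh₀.sub (hh k)).pos_part
      have j' : Integrable (fun x => h k x - h₀ x) μ := (hh k).sub hh₀
      rw [← integral_sub (hh k) hh₀, ← integral_add j j']
      refine integral_congr_ae (Eventually.of_forall fun x => ?_)
      dsimp only
      rcases le_total (h k x) (h₀ x) with h | h
      · rw [max_eq_right (by linarith), max_eq_left (by linarith)]; ring
      · rw [max_eq_left (by linarith), max_eq_right (by linarith)]; ring
    simp_rw [h3]
    simpa using hpos.add (hhint.sub_const (∫ x, h₀ x ∂μ))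
  have h4 : Tendsto (fun k => ∫ x, d k x ∂μ - ∫ x, e k x ∂μ) atTop (𝓝 0) := by
    refine squeeze_zero_norm (fun k => ?_) h2
    rw [← integral_sub (hdi k) (hei k)]
    refine norm_integral_le_of_norm_le ((hh k).sub hh₀).pos_part ?_
    filter_upwards [habs, hdh k] with x hx hx'
    have a1 := (abs_nonneg _).trans hx
    have := abs_le.1 hx'
    simp only [he, Real.norm_eq_abs]
    rw [abs_le, max_def, max_def, min_def]
    constructor <;> split_ifs <;> linarith
  simpa using h4.add h1

section mollify

variable {E : Type*} [NormedAddCommGroup E] [InnerProductSpace ℝ E] [FiniteDimensional ℝ E]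
  [MeasurableSpace E] [BorelSpace E] {μ : Measure E} [μ.IsAddHaarMeasure]

theorem convolutionExists_normed {F : Type*} [NormedAddCommGroup F] [NormedSpace ℝ F]
    (φ : ContDiffBump (0 : E)) {g : E → F}
    (hg : LocallyIntegrable g μ) : ConvolutionExists (φ.normed μ) g (lsmul ℝ ℝ) μ :=
  φ.hasCompactSupport_normed.convolutionExists_left _ φ.continuous_normed hg

/-- Averaging the pointwise bound `c * ‖g y‖ ≤ a + h y` against a probability density keeps `c`
and `a`. With `c = ‖F x‖` this dominates `⟪F x, (φ ⋆ g) x⟫` although `F` itself is not mollified. -/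
theorem mul_norm_convolution_le {F : Type*} [NormedAddCommGroup F] [NormedSpace ℝ F]
    (φ : ContDiffBump (0 : E)) {g : E → F} {h : E → ℝ}
    (hg : LocallyIntegrable g μ) (hh : LocallyIntegrable h μ) {c a : ℝ} (hc : 0 ≤ c)
    (hgh : ∀ y, c * ‖g y‖ ≤ a + h y) (x : E) :
    c * ‖(φ.normed μ ⋆[lsmul ℝ ℝ, μ] g) x‖ ≤ a + (φ.normed μ ⋆[lsmul ℝ ℝ, μ] h) x := by
  have h1 : Integrable (fun t => φ.normed μ t • g (x - t)) μ := convolutionExists_normed φ hg x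
  have h2 : Integrable (fun t => φ.normed μ t • h (x - t)) μ := convolutionExists_normed φ hh x
  have h3 : Integrable (φ.normed μ) μ := φ.integrable_normed
  calc c * ‖(φ.normed μ ⋆[lsmul ℝ ℝ, μ] g) x‖
      ≤ c * ∫ t, ‖φ.normed μ t • g (x - t)‖ ∂μ :=
        mul_le_mul_of_nonneg_left (norm_integral_le_integral_norm _) hc
    _ = ∫ t, c * ‖φ.normed μ t • g (x - t)‖ ∂μ := (integral_const_mul _ _).symm
    _ ≤ ∫ t, (a * φ.normed μ t + φ.normed μ t • h (x - t)) ∂μ := by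
        refine integral_mono (h1.norm.const_mul c) ((h3.const_mul a).add h2) fun t => ?_
        have := mul_le_mul_of_nonneg_left (hgh (x - t)) (φ.nonneg_normed (μ := μ) t)
        simp only [norm_smul, smul_eq_mul, Real.norm_eq_abs, abs_of_nonneg (φ.nonneg_normed t)]
        linarith
    _ = a + (φ.normed μ ⋆[lsmul ℝ ℝ, μ] h) x := by
        rw [integral_add (h3.const_mul a) h2, integral_const_mul, φ.integral_normed, mul_one]
        rfl

/-- Mollification commutes with the gradient of an everywhere differentiable function whose
gradient is locally integrable. The content is an integration by parts that requires no
continuity of the gradient. -/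
theorem hasGradientAt_convolution [CompleteSpace E] {ρ v : E → ℝ} {g : E → E} (hρ : ContDiff ℝ 1 ρ)
    (hρc : HasCompactSupport ρ) (hv : ∀ x, HasGradientAt v (g x) x)
    (hg : LocallyIntegrable g μ) (x : E) :
    HasGradientAt (ρ ⋆[lsmul ℝ ℝ, μ] v) ((ρ ⋆[lsmul ℝ ℝ, μ] g) x) x := by
  have hvc : Continuous v := continuous_iff_continuousAt.2 fun x => (hv x).hasFDerivAt.continuousAt
  have hvl : LocallyIntegrable v μ := hvc.locallyIntegrable
  have h1 := hρc.hasFDerivAt_convolution_left (lsmul ℝ ℝ) hρ hvl (μ := μ) x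
  rw [hasGradientAt_iff_hasFDerivAt]
  suffices key : ∀ w, InnerProductSpace.toDual ℝ E ((ρ ⋆[lsmul ℝ ℝ, μ] g) x) w
      = (fderiv ℝ ρ ⋆[(lsmul ℝ ℝ : ℝ →L[ℝ] ℝ →L[ℝ] ℝ).precompL E, μ] v) x w by
    rw [show InnerProductSpace.toDual ℝ E ((ρ ⋆[lsmul ℝ ℝ, μ] g) x) = _ from
      ContinuousLinearMap.ext key]
    exact h1
  intro w
  have i1 : Integrable (fun t => ρ t • g (x - t)) μ :=
    hρc.convolutionExists_left (lsmul ℝ ℝ) hρ.continuous hg x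
  have i2 : Integrable (fun t => ((lsmul ℝ ℝ : ℝ →L[ℝ] ℝ →L[ℝ] ℝ).precompL E) (fderiv ℝ ρ t) (v (x - t))) μ :=
    (hρc.fderiv ℝ).convolutionExists_left ((lsmul ℝ ℝ : ℝ →L[ℝ] ℝ →L[ℝ] ℝ).precompL E)
      (hρ.continuous_fderiv one_ne_zero) hvl x
  have i3 : Integrable (fun t => ρ t • v (x - t)) μ :=
    hρc.convolutionExists_left (lsmul ℝ ℝ) hρ.continuous hvl x
  have e1 : InnerProductSpace.toDual ℝ E ((ρ ⋆[lsmul ℝ ℝ, μ] g) x) w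
      = ∫ t, ρ t * ⟪w, g (x - t)⟫ ∂μ := by
    rw [InnerProductSpace.toDual_apply_apply, real_inner_comm, convolution_def,
      ← integral_inner (𝕜 := ℝ) (show Integrable (fun t => lsmul ℝ ℝ (ρ t) (g (x - t))) μ from i1)]
    simp [inner_smul_right]
  have e2 : (fderiv ℝ ρ ⋆[(lsmul ℝ ℝ : ℝ →L[ℝ] ℝ →L[ℝ] ℝ).precompL E, μ] v) x w
      = ∫ t, fderiv ℝ ρ t w * v (x - t) ∂μ := by
    rw [convolution_def, ContinuousLinearMap.integral_apply i2]
    simp [ContinuousLinearMap.precompL_apply]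
  rw [e1, e2]
  have j1 : Integrable (fun t => ρ t * ⟪w, g (x - t)⟫) μ := by
    have := i1.const_inner (𝕜 := ℝ) w
    simpa [inner_smul_right] using this
  have j2 : Integrable (fun t => fderiv ℝ ρ t w * v (x - t)) μ := by
    have := i2.apply_continuousLinearMap w
    simpa [ContinuousLinearMap.precompL_apply] using this
  have hd : ∀ t, HasFDerivAt (fun t => v (x - t)) (-(InnerProductSpace.toDual ℝ E (g (x - t)))) t := by
    intro t
    have := (hv (x - t)).hasFDerivAt.comp t ((hasFDerivAt_const x t).sub (hasFDerivAt_id t))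
    exact this.congr_fderiv (ContinuousLinearMap.ext fun z => by simp)
  have key := integral_bilinear_hasFDerivAt_right_eq_neg_left_of_integrable (μ := μ)
    (f := ρ) (f' := fderiv ℝ ρ) (g := fun t => v (x - t))
    (g' := fun t => -(InnerProductSpace.toDual ℝ E (g (x - t)))) (v := w)
    (B := ContinuousLinearMap.mul ℝ ℝ)
    (by simpa using! j2) (by simpa [real_inner_comm] using! j1.neg) (by simpa using! i3)
    (fun t _ => (hρ.differentiable one_ne_zero t).hasFDerivAt) (fun t _ => hd t)
  simp only [ContinuousLinearMap.mul_apply', neg_apply,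
    InnerProductSpace.toDual_apply_apply, mul_neg, integral_neg, neg_inj] at key
  simpa [real_inner_comm] using key

/-- The pairing of `F` with mollifications of `g` converges. Young's inequality
`‖F x‖ * ‖g y‖ ≤ a x + h y` (in practice `a ∼ ‖F‖ ^ p'` and `h = ‖g‖ ^ p`) replaces the duality
between `L^p'` and `L^p`: the mollified right-hand side is a convergent family of majorants. -/
theorem tendsto_integral_inner_convolution {φ : ℕ → ContDiffBump (0 : E)} {C : ℝ}
    (hφ : Tendsto (fun i => (φ i).rOut) atTop (𝓝 0)) (hφC : ∀ i, (φ i).rOut ≤ C * (φ i).rIn)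
    {F g : E → E} {a h : E → ℝ} (hF : AEStronglyMeasurable F μ) (hg : Integrable g μ)
    (hh : Integrable h μ) (ha : Integrable a μ)
    (hFg : ∀ x y, ‖F x‖ * ‖g y‖ ≤ a x + h y) :
    Tendsto (fun k => ∫ x, ⟪F x, ((φ k).normed μ ⋆[lsmul ℝ ℝ, μ] g) x⟫ ∂μ) atTop
      (𝓝 (∫ x, ⟪F x, g x⟫ ∂μ)) := by
  have hgk : ∀ k, Integrable ((φ k).normed μ ⋆[lsmul ℝ ℝ, μ] g) μ := fun k =>
    (φ k).integrable_normed.integrable_convolution _ hg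
  have hhk : ∀ k, Integrable ((φ k).normed μ ⋆[lsmul ℝ ℝ, μ] h) μ := fun k =>
    (φ k).integrable_normed.integrable_convolution _ hh
  refine tendsto_integral_of_dominated_of_tendsto
    (h := fun k x => a x + ((φ k).normed μ ⋆[lsmul ℝ ℝ, μ] h) x) (h₀ := fun x => a x + h x)
    (fun k => hF.inner (hgk k).aestronglyMeasurable) (fun k => ha.add (hhk k)) (ha.add hh) ?_ ?_ ?_ ?_
  · refine fun k => Eventually.of_forall fun x => ?_
    refine (abs_real_inner_le_norm _ _).trans ?_
    exact mul_norm_convolution_le (φ k) hg.locallyIntegrable hh.locallyIntegrable (norm_nonneg _)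
      (hFg x) x
  · filter_upwards [ContDiffBump.ae_convolution_tendsto_right_of_locallyIntegrable hφ
      (Eventually.of_forall hφC) hg.locallyIntegrable] with x hx
    exact tendsto_const_nhds.inner hx
  · filter_upwards [ContDiffBump.ae_convolution_tendsto_right_of_locallyIntegrable hφ
      (Eventually.of_forall hφC) hh.locallyIntegrable] with x hx
    exact tendsto_const_nhds.add hx
  · refine tendsto_const_nhds.congr fun k => ?_
    rw [integral_add ha (hhk k), integral_add ha hh, integral_convolution _ (φ k).integrable_normed hh,
      (φ k).integral_normed]
    simp

end mollify

/-! ### Growth and coercivity of the vector field -/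

section structure_bounds

variable {n : ℕ} {A : EuclideanSpace ℝ (Fin n) → EuclideanSpace ℝ (Fin n)} {p γ Γ : ℝ}

theorem inner_clm_eq_sum (L : EuclideanSpace ℝ (Fin n) →L[ℝ] EuclideanSpace ℝ (Fin n))
    (ξ ζ : EuclideanSpace ℝ (Fin n)) :
    ⟪L ξ, ζ⟫ = ∑ i, ∑ j, L (EuclideanSpace.single i 1) j * ξ i * ζ j := by
  have h : ξ = ∑ i, ξ i • EuclideanSpace.single i (1 : ℝ) := by
    have := (EuclideanSpace.basisFun (Fin n) ℝ).sum_repr ξ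
    simpa using this.symm
  have h2 : L ξ = ∑ i, ξ i • L (EuclideanSpace.single i (1 : ℝ)) := by
    conv_lhs => rw [h]
    simp [map_sum]
  rw [h2, sum_inner]
  refine Finset.sum_congr rfl fun i _ => ?_
  rw [inner_smul_left, PiLp.inner_apply, Finset.mul_sum]
  refine Finset.sum_congr rfl fun j _ => ?_
  simp
  ring

theorem abs_inner_clm_le (L : EuclideanSpace ℝ (Fin n) →L[ℝ] EuclideanSpace ℝ (Fin n)) {B : ℝ}
    (hB : ∑ i, ∑ j, |L (EuclideanSpace.single i 1) j| ≤ B) (ξ ζ : EuclideanSpace ℝ (Fin n)) :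
    |⟪L ξ, ζ⟫| ≤ B * (‖ξ‖ * ‖ζ‖) := by
  rw [inner_clm_eq_sum]
  refine le_trans ?_ (mul_le_mul_of_nonneg_right hB (by positivity))
  rw [Finset.sum_mul]
  refine (Finset.abs_sum_le_sum_abs _ _).trans (Finset.sum_le_sum fun i _ => ?_)
  rw [Finset.sum_mul]
  refine (Finset.abs_sum_le_sum_abs _ _).trans (Finset.sum_le_sum fun j _ => ?_)
  rw [abs_mul, abs_mul, mul_assoc]
  have h1 : |ξ i| ≤ ‖ξ‖ := by simpa using PiLp.norm_apply_le ξ i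
  have h2 : |ζ j| ≤ ‖ζ‖ := by simpa using PiLp.norm_apply_le ζ j
  gcongr

/-- The derivative of `t ↦ ⟪A (t η), w⟫` away from `t = 0`. -/
theorem hasDerivAt_inner_ray (hA : ContDiffOn ℝ 1 A {0}ᶜ) {η : EuclideanSpace ℝ (Fin n)}
    (hη : η ≠ 0) (w : EuclideanSpace ℝ (Fin n)) {t : ℝ} (ht : t ≠ 0) :
    HasDerivAt (fun s : ℝ => ⟪A (s • η), w⟫) ⟪fderiv ℝ A (t • η) η, w⟫ t := by
  have h0 : t • η ∈ ({0}ᶜ : Set (EuclideanSpace ℝ (Fin n))) := by simp [ht, hη]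
  have h1 : HasFDerivAt A (fderiv ℝ A (t • η)) (t • η) :=
    ((hA.differentiableOn one_ne_zero).differentiableAt
      (isOpen_compl_singleton.mem_nhds h0)).hasFDerivAt
  have h2 : HasDerivAt (fun s : ℝ => s • η) η t := by
    simpa using (hasDerivAt_id t).smul_const η
  have h3 := (h1.comp_hasDerivAt t h2).inner ℝ (hasDerivAt_const t w)
  simpa using h3

theorem continuous_inner_ray (hAc : Continuous A) (η w : EuclideanSpace ℝ (Fin n)) :
    Continuous (fun s : ℝ => ⟪A (s • η), w⟫) := by fun_prop

/-- Growth bound, from the mean value theorem along the ray through `η`. -/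
theorem norm_le_of_fderiv_le (hp : 2 ≤ p) (hAc : Continuous A) (hA : ContDiffOn ℝ 1 A {0}ᶜ)
    (hA0 : A 0 = 0) (hΓ : 0 ≤ Γ)
    (hup : ∀ η : EuclideanSpace ℝ (Fin n), η ≠ 0 →
      ∑ i, ∑ j, |fderiv ℝ A η (EuclideanSpace.single i 1) j| ≤ Γ * ‖η‖ ^ (p - 2))
    (η : EuclideanSpace ℝ (Fin n)) : ‖A η‖ ≤ Γ * ‖η‖ ^ (p - 1) := by
  rcases eq_or_ne η 0 with rfl | hη
  · rw [hA0, norm_zero]; positivity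
  rcases eq_or_ne (A η) 0 with hAη | hAη
  · rw [hAη, norm_zero]; positivity
  obtain ⟨c, ⟨hc0, hc1⟩, hc⟩ := exists_hasDerivAt_eq_slope (fun s : ℝ => ⟪A (s • η), A η⟫)
    (fun t => ⟪fderiv ℝ A (t • η) η, A η⟫) zero_lt_one
    (continuous_inner_ray hAc η _).continuousOn
    (fun t ht => hasDerivAt_inner_ray hA hη _ ht.1.ne')
  have hcη : c • η ≠ 0 := by simp [hc0.ne', hη]
  have h1 := (le_abs_self _).trans (abs_inner_clm_le _ (hup _ hcη) η (A η))
  have h2 : ‖c • η‖ ^ (p - 2) ≤ ‖η‖ ^ (p - 2) := by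
    refine Real.rpow_le_rpow (norm_nonneg _) ?_ (by linarith)
    rw [norm_smul, Real.norm_of_nonneg hc0.le]
    exact mul_le_of_le_one_left (norm_nonneg _) hc1.le
  simp only [one_smul, zero_smul, hA0, inner_zero_left, sub_zero, div_one,
    real_inner_self_eq_norm_sq] at hc
  have hpos : 0 < ‖A η‖ := norm_pos_iff.2 hAη
  have h3 : ‖η‖ ^ (p - 1) = ‖η‖ ^ (p - 2) * ‖η‖ := by
    rw [← Real.rpow_add_one (norm_ne_zero_iff.2 hη)]; congr 1; ring
  have h4 : ‖A η‖ * ‖A η‖ ≤ (Γ * ‖η‖ ^ (p - 1)) * ‖A η‖ := by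
    rw [← sq, ← hc, h3]
    refine h1.trans ?_
    have : Γ * ‖c • η‖ ^ (p - 2) * (‖η‖ * ‖A η‖) ≤ Γ * ‖η‖ ^ (p - 2) * (‖η‖ * ‖A η‖) := by gcongr
    linarith
  exact le_of_mul_le_mul_right h4 hpos

/-- Coercivity: along the ray through `η` the function `t ↦ ⟪A (t η), η⟫` is increasing, and its
derivative is bounded below on `[1/2, 1]`. -/
theorem coercive_of_le_fderiv (hp : 2 ≤ p) (hAc : Continuous A) (hA : ContDiffOn ℝ 1 A {0}ᶜ)
    (hA0 : A 0 = 0) (hγ : 0 < γ)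
    (hlow : ∀ η : EuclideanSpace ℝ (Fin n), η ≠ 0 → ∀ ξ : EuclideanSpace ℝ (Fin n),
      γ * ‖ξ‖ ^ (2 : ℕ) * ‖η‖ ^ (p - 2) ≤
        ∑ i, ∑ j, fderiv ℝ A η (EuclideanSpace.single i 1) j * ξ i * ξ j)
    (η : EuclideanSpace ℝ (Fin n)) :
    γ / 2 * (1 / 2) ^ (p - 2) * ‖η‖ ^ p ≤ ⟪A η, η⟫ := by
  rcases eq_or_ne η 0 with rfl | hη
  · simp [Real.zero_rpow (by linarith : p ≠ 0)]
  have hd : ∀ t : ℝ, 0 < t → γ * ‖η‖ ^ (2 : ℕ) * ‖t • η‖ ^ (p - 2) ≤ ⟪fderiv ℝ A (t • η) η, η⟫ := by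
    intro t ht
    rw [inner_clm_eq_sum]
    exact hlow _ (by simp [ht.ne', hη]) η
  obtain ⟨c, ⟨hc0, hc1⟩, hc⟩ := exists_hasDerivAt_eq_slope (fun s : ℝ => ⟪A (s • η), η⟫)
    (fun t => ⟪fderiv ℝ A (t • η) η, η⟫) (show (0 : ℝ) < 1 / 2 by norm_num)
    (continuous_inner_ray hAc η _).continuousOn
    (fun t ht => hasDerivAt_inner_ray hA hη _ ht.1.ne')
  obtain ⟨e, ⟨he0, he1⟩, he⟩ := exists_hasDerivAt_eq_slope (fun s : ℝ => ⟪A (s • η), η⟫)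
    (fun t => ⟪fderiv ℝ A (t • η) η, η⟫) (show (1 / 2 : ℝ) < 1 by norm_num)
    (continuous_inner_ray hAc η _).continuousOn
    (fun t ht => hasDerivAt_inner_ray hA hη _ (lt_trans (by norm_num) ht.1).ne')
  have h1 := (by positivity : (0 : ℝ) ≤ γ * ‖η‖ ^ (2 : ℕ) * ‖c • η‖ ^ (p - 2)).trans (hd c hc0)
  have h2 := hd e (lt_trans (by norm_num) he0)
  rw [hc] at h1
  rw [he] at h2
  simp only [one_smul, zero_smul, hA0, inner_zero_left, sub_zero] at h1 h2
  have h3 : (1 / 2) ^ (p - 2) * ‖η‖ ^ (p - 2) ≤ ‖e • η‖ ^ (p - 2) := by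
    rw [← Real.mul_rpow (by norm_num) (norm_nonneg _), norm_smul,
      Real.norm_of_nonneg (lt_trans (by norm_num) he0).le]
    refine Real.rpow_le_rpow (by positivity) ?_ (by linarith)
    gcongr
  have h4 : ‖η‖ ^ p = ‖η‖ ^ (2 : ℕ) * ‖η‖ ^ (p - 2) := by
    rw [← Real.rpow_natCast, ← Real.rpow_add (norm_pos_iff.2 hη)]; congr 1; push_cast; ring
  have h5 : γ * ‖η‖ ^ (2 : ℕ) * ((1 / 2) ^ (p - 2) * ‖η‖ ^ (p - 2))
      ≤ γ * ‖η‖ ^ (2 : ℕ) * ‖e • η‖ ^ (p - 2) := by gcongr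
  have h6 : 0 ≤ ⟪A ((1 / 2 : ℝ) • η), η⟫ := by
    by_contra hneg
    exact absurd h1 (not_le.2 (div_neg_of_neg_of_pos (not_le.1 hneg) (by norm_num)))
  have h7 := h5.trans h2
  rw [le_div_iff₀ (by norm_num)] at h7
  rw [h4]
  linarith

end structure_bounds

/-! ### Extension of the class of test functions -/

section weak

variable {E : Type*} [NormedAddCommGroup E] [InnerProductSpace ℝ E] [FiniteDimensional ℝ E]
  [CompleteSpace E] [MeasurableSpace E] [BorelSpace E] {μ : Measure E} [μ.IsAddHaarMeasure]

/-- Mollifying at scale at most `δ` enlarges the support by at most `δ`. -/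
theorem conv_normed_eq_zero {G : Type*} [NormedAddCommGroup G] [NormedSpace ℝ G]
    {φ : ContDiffBump (0 : E)} {δ : ℝ} (hφ : φ.rOut ≤ δ) {T : Set E} {w : E → G}
    (hw : ∀ x, x ∉ T → w x = 0) {x : E} (hx : x ∉ cthickening δ T) :
    (φ.normed μ ⋆[lsmul ℝ ℝ, μ] w) x = 0 := by
  by_contra hne
  obtain ⟨y, hy, z, hz, rfl⟩ := support_convolution_subset (lsmul ℝ ℝ) hne
  refine hx (mem_cthickening_of_dist_le _ z _ _ (by_contra fun h => hz (hw z h)) ?_)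
  rw [φ.support_normed_eq, mem_ball_zero_iff] at hy
  rw [dist_eq_norm, add_sub_cancel_right]
  exact hy.le.trans hφ

/-- The weak equation extends from Lipschitz test functions to every everywhere differentiable
compactly supported `v` whose gradient has integrable `p`-th power. The hypothesis `ha` is the
growth bound on `F` in the form given by Young's inequality. -/
theorem weak_formulation_extend {Ω : Set E} (hΩ : IsOpen Ω) {F : E → E} {f a : E → ℝ} {p : ℝ}
    (hF : AEStronglyMeasurable F μ) (ha : ∀ x s, 0 ≤ s → ‖F x‖ * s ≤ a x + s ^ p)
    (hai : LocallyIntegrableOn a Ω μ) (hf : ∀ S, IsCompact S → S ⊆ Ω → IntegrableOn f S μ)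
    (hweak : ∀ ψ : E → ℝ, (∃ c : ℝ≥0, LipschitzWith c ψ) → HasCompactSupport ψ → tsupport ψ ⊆ Ω →
      ∫ x in Ω, ⟪F x, gradient ψ x⟫ ∂μ = ∫ x in Ω, f x * ψ x ∂μ)
    {v : E → ℝ} {g : E → E} (hv : ∀ x, HasGradientAt v (g x) x) (hvc : HasCompactSupport v)
    (hvΩ : tsupport v ⊆ Ω) (hg : Integrable g μ) (hgp : Integrable (fun x => ‖g x‖ ^ p) μ) :
    ∫ x in Ω, ⟪F x, g x⟫ ∂μ = ∫ x in Ω, f x * v x ∂μ := by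
  obtain ⟨δ, hδ, hδΩ⟩ := IsCompact.exists_cthickening_subset_open hvc hΩ hvΩ
  set S := cthickening δ (tsupport v) with hS
  have hSc : IsCompact S := IsCompact.cthickening hvc
  have hvcont : Continuous v :=
    continuous_iff_continuousAt.2 fun x => (hv x).hasFDerivAt.continuousAt
  have hg0 : ∀ x, x ∉ tsupport v → g x = 0 := by
    intro x hx
    have h1 : v =ᶠ[𝓝 x] fun _ => 0 := notMem_tsupport_iff_eventuallyEq.1 hx
    have h2 : HasGradientAt v 0 x := by
      rw [hasGradientAt_iff_hasFDerivAt, map_zero]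
      exact (hasFDerivAt_const (0 : ℝ) x).congr_of_eventuallyEq h1
    exact (hv x).unique h2
  -- mollifiers of radius at most `δ`
  let φ : ℕ → ContDiffBump (0 : E) := fun k =>
    ⟨δ / (k + 1) / 2, δ / (k + 1), by positivity, half_lt_self (by positivity)⟩
  have hφ : Tendsto (fun k => (φ k).rOut) atTop (𝓝 0) := by
    have := (tendsto_one_div_add_atTop_nhds_zero_nat (𝕜 := ℝ)).const_mul δ
    simpa [φ, div_eq_mul_inv] using this
  have hφδ : ∀ k, (φ k).rOut ≤ δ := fun k =>
    div_le_self hδ.le (by have := k.cast_nonneg (α := ℝ); linarith)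
  have hφ2 : ∀ k, (φ k).rOut ≤ 2 * (φ k).rIn := fun k => by simp only [φ]; linarith
  have hvl : LocallyIntegrable v μ := hvcont.locallyIntegrable
  have htest : ∀ k, ∫ x in Ω, ⟪F x, ((φ k).normed μ ⋆[lsmul ℝ ℝ, μ] g) x⟫ ∂μ
      = ∫ x in Ω, f x * ((φ k).normed μ ⋆[lsmul ℝ ℝ, μ] v) x ∂μ := by
    intro k
    have hcd : ContDiff ℝ 1 ((φ k).normed μ ⋆[lsmul ℝ ℝ, μ] v) :=
      (φ k).hasCompactSupport_normed.contDiff_convolution_left (n := 1) _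
        (φ k).contDiff_normed hvl
    have hcs : HasCompactSupport ((φ k).normed μ ⋆[lsmul ℝ ℝ, μ] v) :=
      (φ k).hasCompactSupport_normed.convolution _ hvc
    have hts : tsupport ((φ k).normed μ ⋆[lsmul ℝ ℝ, μ] v) ⊆ Ω := by
      refine (closure_minimal (fun x hx => ?_) hSc.isClosed).trans hδΩ
      exact by_contra fun h => hx (conv_normed_eq_zero (hφδ k) (fun x hx => image_eq_zero_of_notMem_tsupport hx) h)
    rw [← hweak _ (ContDiff.lipschitzWith_of_hasCompactSupport hcs hcd one_ne_zero) hcs hts]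
    congr 1
    ext x
    rw [(hasGradientAt_convolution (φ k).contDiff_normed (φ k).hasCompactSupport_normed hv
      hg.locallyIntegrable x).gradient]
  have hFloc : ∀ w : E → E, (∀ x, x ∉ S → w x = 0) →
      ∫ x in Ω, ⟪F x, w x⟫ ∂μ = ∫ x, ⟪S.indicator F x, w x⟫ ∂μ := by
    intro w hw
    rw [setIntegral_eq_integral_of_forall_compl_eq_zero fun x hx => by
      rw [hw x fun h => hx (hδΩ h), inner_zero_right]]
    congr 1
    ext x
    by_cases hx : x ∈ S
    · rw [indicator_of_mem hx]
    · rw [hw x hx, inner_zero_right, inner_zero_right]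
  have hfloc : ∀ w : E → ℝ, (∀ x, x ∉ S → w x = 0) →
      ∫ x in Ω, f x * w x ∂μ = ∫ x, S.indicator f x * w x ∂μ := by
    intro w hw
    rw [setIntegral_eq_integral_of_forall_compl_eq_zero fun x hx => by
      rw [hw x fun h => hx (hδΩ h), mul_zero]]
    congr 1
    ext x
    by_cases hx : x ∈ S
    · rw [indicator_of_mem hx]
    · rw [hw x hx, mul_zero, mul_zero]
  have hTS : tsupport v ⊆ S := self_subset_cthickening _
  have lim1 : Tendsto (fun k => ∫ x in Ω, ⟪F x, ((φ k).normed μ ⋆[lsmul ℝ ℝ, μ] g) x⟫ ∂μ) atTop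
      (𝓝 (∫ x in Ω, ⟪F x, g x⟫ ∂μ)) := by
    rw [hFloc g fun x hx => hg0 x fun h => hx (hTS h)]
    refine Tendsto.congr (fun k => (hFloc _ (fun x hx => conv_normed_eq_zero (hφδ k) hg0 hx)).symm) ?_
    refine tendsto_integral_inner_convolution hφ hφ2 (hF.indicator hSc.measurableSet) hg hgp
      (a := S.indicator a) ?_ ?_
    · exact (integrable_indicator_iff hSc.measurableSet).2
        (hai.integrableOn_compact_subset hδΩ hSc)
    · intro x y
      by_cases hx : x ∈ S
      · simpa [hx] using ha x _ (norm_nonneg (g y))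
      · simp only [hx, not_false_eq_true, indicator_of_notMem, norm_zero, zero_mul, zero_add]
        positivity
  have hfi : Integrable (S.indicator f) μ :=
    (integrable_indicator_iff hSc.measurableSet).2 (hf S hSc hδΩ)
  have lim2 : Tendsto (fun k => ∫ x in Ω, f x * ((φ k).normed μ ⋆[lsmul ℝ ℝ, μ] v) x ∂μ) atTop
      (𝓝 (∫ x in Ω, f x * v x ∂μ)) := by
    have hv0 : ∀ x, x ∉ tsupport v → v x = 0 := fun x hx => image_eq_zero_of_notMem_tsupport hx
    rw [hfloc v fun x hx => hv0 x fun h => hx (hTS h)]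
    refine Tendsto.congr (fun k => (hfloc _ (fun x hx => conv_normed_eq_zero (hφδ k) hv0 hx)).symm) ?_
    obtain ⟨M, hM⟩ := hvc.exists_bound_of_continuous hvcont
    refine tendsto_integral_of_dominated_convergence (fun x => ‖S.indicator f x‖ * M) ?_
      (hfi.norm.mul_const M) ?_ ?_
    · intro k
      exact hfi.aestronglyMeasurable.mul
        ((φ k).hasCompactSupport_normed.continuous_convolution_left _
          (φ k).continuous_normed hvl).aestronglyMeasurable
    · refine fun k => Eventually.of_forall fun x => ?_
      rw [norm_mul]
      refine mul_le_mul_of_nonneg_left ?_ (norm_nonneg _)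
      have := mul_norm_convolution_le (φ k) (μ := μ) (h := 0) (a := M) hvl
        (integrable_zero _ _ _).locallyIntegrable zero_le_one (by simpa using hM) x
      simpa [convolution_zero] using this
    · refine Eventually.of_forall fun x => ?_
      exact (ContDiffBump.convolution_tendsto_right_of_continuous hφ hvcont x).const_mul _
  simp_rw [htest] at lim1
  exact tendsto_nhds_unique lim1 lim2

end weak

/-! ### The Caccioppoli estimate -/

/-- Young's inequality with a small constant on the term `a ^ p`, used to absorb the gradient. -/
theorem exists_absorb {p K ε : ℝ} (hp : 1 < p) (hK : 0 ≤ K) (hε : 0 < ε) :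
    ∃ C, 0 ≤ C ∧ ∀ a b : ℝ, 0 ≤ a → 0 ≤ b → K * a ^ (p - 1) * b ≤ ε * a ^ p + C * b ^ p := by
  have key : ∀ a : ℝ, 0 ≤ a → a ^ p = a ^ (p - 1) * a := fun a ha => by
    rw [← rpow_add_one' ha (by linarith), sub_add_cancel]
  refine ⟨K * (K / ε) ^ (p - 1), by positivity, fun a b ha hb => ?_⟩
  -- compare `K * b` with `ε * a` directly, so the constant needs no conjugate exponent
  rcases le_total (K * b) (ε * a) with h | h
  · have h1 : 0 ≤ K * (K / ε) ^ (p - 1) * b ^ p := by positivity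
    have h2 := mul_le_mul_of_nonneg_left h (rpow_nonneg ha (p - 1))
    rw [key a ha]
    linarith
  · have h1 : a ≤ K / ε * b := by
      rw [div_mul_eq_mul_div, le_div_iff₀ hε]; linarith
    have h2 : a ^ (p - 1) ≤ (K / ε) ^ (p - 1) * b ^ (p - 1) := by
      rw [← mul_rpow (by positivity) hb]
      exact rpow_le_rpow ha h1 (by linarith)
    have h3 := mul_le_mul_of_nonneg_left h2 (mul_nonneg hK hb)
    have h4 : 0 ≤ ε * a ^ p := by positivity
    rw [key b hb]
    linarith

/-- Young's inequality with constant one on the term `s ^ p`. -/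
theorem exists_young {p Γ : ℝ} (hp : 1 < p) (hΓ : 0 ≤ Γ) :
    ∃ C, 0 ≤ C ∧ ∀ a s : ℝ, 0 ≤ a → 0 ≤ s → Γ * a ^ (p - 1) * s ≤ C * a ^ p + s ^ p := by
  have key : ∀ a : ℝ, 0 ≤ a → a ^ p = a ^ (p - 1) * a := fun a ha => by
    rw [← rpow_add_one' ha (by linarith), sub_add_cancel]
  have hp1 : p - 1 ≠ 0 := by linarith
  set t := Γ ^ (p - 1)⁻¹ with ht
  have ht0 : 0 ≤ t := by positivity
  have htp : t ^ (p - 1) = Γ := by rw [ht, ← rpow_mul hΓ, inv_mul_cancel₀ hp1, rpow_one]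
  refine ⟨Γ * t, by positivity, fun a s ha hs => ?_⟩
  rcases le_total s (t * a) with h | h
  · have h1 := mul_le_mul_of_nonneg_left h (mul_nonneg hΓ (rpow_nonneg ha (p - 1)))
    have h2 : 0 ≤ s ^ p := by positivity
    rw [key a ha]
    linarith
  · have h1 : Γ * a ^ (p - 1) ≤ s ^ (p - 1) := by
      rw [← htp, ← mul_rpow ht0 ha]
      exact rpow_le_rpow (by positivity) h (by linarith)
    have h2 := mul_le_mul_of_nonneg_right h1 hs
    have h3 : 0 ≤ Γ * t * a ^ p := by positivity
    rw [key s hs]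
    linarith

theorem add_rpow_le {p a b : ℝ} (hp : 0 ≤ p) (ha : 0 ≤ a) (hb : 0 ≤ b) :
    (a + b) ^ p ≤ 2 ^ p * (a ^ p + b ^ p) := by
  wlog h : a ≤ b generalizing a b
  · rw [add_comm a, add_comm (a ^ p)]; exact this hb ha (le_of_not_ge h)
  calc (a + b) ^ p ≤ (2 * b) ^ p := rpow_le_rpow (by positivity) (by linarith) hp
    _ = 2 ^ p * b ^ p := mul_rpow (by norm_num) hb
    _ ≤ _ := by gcongr; linarith [rpow_nonneg ha p]

section caccioppoli

variable {E : Type*} [NormedAddCommGroup E] [InnerProductSpace ℝ E] [FiniteDimensional ℝ E]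
  [CompleteSpace E] [MeasurableSpace E] [BorelSpace E] {μ : Measure E} [μ.IsAddHaarMeasure]

/-- No differentiability of `u` is needed: the set of points of differentiability is measurable, and
the gradient vanishes by convention elsewhere. -/
theorem measurable_gradient (u : E → ℝ) : Measurable (gradient u) :=
  (InnerProductSpace.toDual ℝ E).symm.continuous.measurable.comp (measurable_fderiv ℝ u)

theorem hasGradientAt_mul_rpow {u φ : E → ℝ} {w d x : E} {p : ℝ} (hp : 1 ≤ p)
    (hu : HasGradientAt u w x) (hφ : HasGradientAt φ d x) :
    HasGradientAt (fun y => u y * φ y ^ p)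
      (φ x ^ p • w + (u x * (p * φ x ^ (p - 1))) • d) x := by
  rw [hasGradientAt_iff_hasFDerivAt] at *
  refine (hu.fun_mul (hφ.rpow_const (p := p) (Or.inr hp))).congr_fderiv ?_
  rw [map_add, map_smulₛₗ, map_smulₛₗ, smul_smul, add_comm]
  rfl

/-- The Caccioppoli estimate. The constant depends on `u` only through the bound `M`, and on `f` only
through its integral over `W`, a set off which the admissible cutoffs `φ` vanish; it is uniform
in `φ`. -/
theorem caccioppoli {Ω W : Set E} (hΩ : IsOpen Ω) {p Γ c M : ℝ} (hp : 2 ≤ p) (hc : 0 < c)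
    (hΓ : 0 ≤ Γ) (hM : 0 ≤ M) {F : E → E} {f u : E → ℝ} (hF : AEStronglyMeasurable F μ)
    (hFup : ∀ x, ‖F x‖ ≤ Γ * ‖gradient u x‖ ^ (p - 1))
    (hFlow : ∀ x, c * ‖gradient u x‖ ^ p ≤ ⟪F x, gradient u x⟫)
    (hu : DifferentiableOn ℝ u Ω) (huM : ∀ x ∈ Ω, |u x| ≤ M)
    (hul : LocallyIntegrableOn (fun x => ‖gradient u x‖ ^ p) Ω μ)
    (hf : ∀ S, IsCompact S → S ⊆ Ω → IntegrableOn f S μ)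
    (hweak : ∀ ψ : E → ℝ, (∃ c : ℝ≥0, LipschitzWith c ψ) → HasCompactSupport ψ → tsupport ψ ⊆ Ω →
      ∫ x in Ω, ⟪F x, gradient ψ x⟫ ∂μ = ∫ x in Ω, f x * ψ x ∂μ)
    (hW : MeasurableSet W) (hfW : IntegrableOn f W μ) :
    ∃ C, 0 ≤ C ∧ ∀ φ : E → ℝ, ContDiff ℝ 1 φ → (∀ x, 0 ≤ φ x) → (∀ x, φ x ≤ 1) →
      HasCompactSupport φ → tsupport φ ⊆ Ω → (∀ x, x ∉ W → φ x = 0) →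
      Integrable (fun x => (φ x * ‖gradient u x‖) ^ p) μ ∧
      ∫ x, (φ x * ‖gradient u x‖) ^ p ∂μ ≤ C * (1 + ∫ x, ‖gradient φ x‖ ^ p ∂μ) := by
  have hp1 : 1 < p := by linarith
  obtain ⟨C₁, hC₁, hab⟩ := exists_absorb (K := M * p * Γ) (ε := c / 2) hp1 (by positivity)
    (by positivity)
  obtain ⟨C₂, hC₂, hyo⟩ := exists_young hp1 hΓ
  set w := gradient u with hw
  have hwm : Measurable w := measurable_gradient u
  have hI : 0 ≤ ∫ x in W, ‖f x‖ ∂μ := integral_nonneg fun _ => norm_nonneg _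
  refine ⟨(2 / c) * (C₁ + M * ∫ x in W, ‖f x‖ ∂μ), by positivity,
    fun φ hφ hφ0 hφ1 hφc hφΩ hφW => ?_⟩
  set T := tsupport φ with hT
  have hTc : IsCompact T := hφc
  have hφT : ∀ x, x ∉ T → φ x = 0 := fun x hx => image_eq_zero_of_notMem_tsupport hx
  have hφd : ∀ x, HasGradientAt φ (gradient φ x) x := fun x =>
    (hφ.differentiable one_ne_zero x).hasGradientAt
  have hgc : Continuous (gradient φ) :=
    (InnerProductSpace.toDual ℝ E).symm.continuous.comp (hφ.continuous_fderiv one_ne_zero)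
  have hgT : ∀ x, x ∉ T → gradient φ x = 0 := by
    intro x hx
    have : fderiv ℝ φ x = 0 := image_eq_zero_of_notMem_tsupport
      fun h => hx (tsupport_fderiv_subset ℝ h)
    simp [gradient, this]
  have hgcs : HasCompactSupport (gradient φ) := HasCompactSupport.intro hTc hgT
  obtain ⟨B, hB⟩ := hgcs.exists_bound_of_continuous hgc
  have hB0 : 0 ≤ B := (norm_nonneg _).trans (hB 0)
  have hgi : Integrable (fun x => ‖gradient φ x‖ ^ p) μ := by
    refine Continuous.integrable_of_hasCompactSupport
      (hgc.norm.rpow_const fun x => Or.inr (by linarith)) ?_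
    refine HasCompactSupport.intro hTc fun x hx => ?_
    rw [hgT x hx, norm_zero, zero_rpow (by linarith)]
  -- the test function is `v = u * φ ^ p`, with gradient `g`
  set v : E → ℝ := fun y => u y * φ y ^ p with hv
  set g : E → E := fun x => φ x ^ p • w x + (u x * (p * φ x ^ (p - 1))) • gradient φ x with hg
  have hg0 : ∀ x, x ∉ T → g x = 0 := by
    intro x hx
    simp only [hg, hgT x hx, hφT x hx, smul_zero, add_zero]
    rw [zero_rpow (by linarith), zero_smul]
  have hv0 : ∀ x, x ∉ T → v x = 0 := by
    intro x hx
    simp only [hv, hφT x hx]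
    rw [zero_rpow (by linarith), mul_zero]
  have hvg : ∀ x, HasGradientAt v (g x) x := by
    intro x
    by_cases hx : x ∈ T
    · exact hasGradientAt_mul_rpow hp1.le
        (hu.differentiableAt (hΩ.mem_nhds (hφΩ hx))).hasGradientAt (hφd x)
    · rw [hg0 x hx, hasGradientAt_iff_hasFDerivAt, map_zero]
      refine (hasFDerivAt_const (0 : ℝ) x).congr_of_eventuallyEq ?_
      filter_upwards [(isClosed_tsupport φ).isOpen_compl.mem_nhds hx] with y hy
      exact hv0 y hy
  have hvc : HasCompactSupport v := HasCompactSupport.intro hTc hv0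
  have hvT : tsupport v ⊆ T := closure_minimal
    (fun x hx => by_contra fun h => hx (hv0 x h)) (isClosed_tsupport φ)
  have hgm : Measurable g := by
    have : g = gradient v := funext fun x => (hvg x).gradient.symm
    rw [this]
    exact measurable_gradient v
  have hpow : ∀ x, φ x ^ p ≤ 1 := fun x => rpow_le_one (hφ0 x) (hφ1 x) (by linarith)
  have hpow1 : ∀ x, φ x ^ (p - 1) ≤ 1 := fun x => rpow_le_one (hφ0 x) (hφ1 x) (by linarith)
  have hwT : IntegrableOn (fun x => ‖w x‖ ^ p) T μ := hul.integrableOn_compact_subset hφΩ hTc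
  have hgbd : ∀ x ∈ T, ‖g x‖ ≤ ‖w x‖ + M * p * B := by
    intro x hx
    refine (norm_add_le _ _).trans (add_le_add ?_ ?_)
    · rw [norm_smul, norm_of_nonneg (rpow_nonneg (hφ0 x) _)]
      exact mul_le_of_le_one_left (norm_nonneg _) (hpow x)
    · rw [norm_smul]
      refine mul_le_mul ?_ (hB x) (norm_nonneg _) (by positivity)
      have h0 : 0 ≤ p * φ x ^ (p - 1) := mul_nonneg (by linarith) (rpow_nonneg (hφ0 x) _)
      rw [norm_mul, norm_of_nonneg h0]
      have h1 : ‖u x‖ ≤ M := huM x (hφΩ hx)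
      have h2 : p * φ x ^ (p - 1) ≤ p := mul_le_of_le_one_right (by linarith) (hpow1 x)
      exact mul_le_mul h1 h2 h0 hM
  have hgp : Integrable (fun x => ‖g x‖ ^ p) μ := by
    have h1 : IntegrableOn (fun x => 2 ^ p * (‖w x‖ ^ p + (M * p * B) ^ p)) T μ :=
      (hwT.add (integrableOn_const hTc.measure_lt_top.ne)).const_mul _
    refine (IntegrableOn.integrable_of_forall_notMem_eq_zero (s := T) ?_ ?_)
    · refine h1.mono' (hgm.norm.pow_const p).aestronglyMeasurable ?_
      filter_upwards [ae_restrict_mem hTc.measurableSet] with x hx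
      rw [norm_of_nonneg (by positivity)]
      exact (rpow_le_rpow (norm_nonneg _) (hgbd x hx) (by linarith)).trans
        (add_rpow_le (by linarith) (norm_nonneg _) (by positivity))
    · intro x hx
      rw [hg0 x hx, norm_zero, zero_rpow (by linarith)]
  have hgi1 : Integrable g μ := by
    have h1 : IntegrableOn (fun x => 1 + ‖g x‖ ^ p) T μ :=
      (integrableOn_const hTc.measure_lt_top.ne).add hgp.integrableOn
    refine (IntegrableOn.integrable_of_forall_notMem_eq_zero (s := T) ?_ hg0)
    refine h1.mono' hgm.aestronglyMeasurable (Eventually.of_forall fun x => ?_)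
    rcases le_total ‖g x‖ 1 with h | h
    · linarith [rpow_nonneg (norm_nonneg (g x)) p]
    · linarith [self_le_rpow_of_one_le h hp1.le]
  have ha : ∀ x s, 0 ≤ s → ‖F x‖ * s ≤ C₂ * ‖w x‖ ^ p + s ^ p := fun x s hs =>
    (mul_le_mul_of_nonneg_right (hFup x) hs).trans (hyo _ _ (norm_nonneg _) hs)
  have heq := weak_formulation_extend hΩ hF ha
    (hul.smul C₂) hf hweak hvg hvc (hvT.trans hφΩ) hgi1 hgp
  have hFg : Integrable (fun x => ⟪F x, g x⟫) μ := by
    refine (IntegrableOn.integrable_of_forall_notMem_eq_zero (s := T) ?_ fun x hx => by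
      rw [hg0 x hx, inner_zero_right])
    refine ((hwT.const_mul C₂).add hgp.integrableOn).mono'
      (hF.inner hgm.aestronglyMeasurable).restrict (Eventually.of_forall fun x => ?_)
    exact (norm_inner_le_norm _ _).trans (ha x _ (norm_nonneg _))
  have hLi : Integrable (fun x => (φ x * ‖w x‖) ^ p) μ := by
    refine (IntegrableOn.integrable_of_forall_notMem_eq_zero (s := T) ?_ fun x hx => by
      rw [hφT x hx, zero_mul, zero_rpow (by linarith)])
    refine hwT.mono' ((hφ.continuous.measurable.mul hwm.norm).pow_const p).aestronglyMeasurable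
      (Eventually.of_forall fun x => ?_)
    rw [norm_of_nonneg (rpow_nonneg (mul_nonneg (hφ0 x) (norm_nonneg _)) _)]
    exact rpow_le_rpow (mul_nonneg (hφ0 x) (norm_nonneg _))
      (mul_le_of_le_one_left (norm_nonneg _) (hφ1 x)) (by linarith)
  refine ⟨hLi, ?_⟩
  rw [setIntegral_eq_integral_of_forall_compl_eq_zero fun x hx => by
      rw [hg0 x fun h => hx (hφΩ h), inner_zero_right],
    setIntegral_eq_integral_of_forall_compl_eq_zero fun x hx => by
      rw [hv0 x fun h => hx (hφΩ h), mul_zero]] at heq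
  have hlow : c / 2 * ∫ x, (φ x * ‖w x‖) ^ p ∂μ - C₁ * ∫ x, ‖gradient φ x‖ ^ p ∂μ
      ≤ ∫ x, ⟪F x, g x⟫ ∂μ := by
    rw [← integral_const_mul, ← integral_const_mul,
      ← integral_sub (hLi.const_mul _) (hgi.const_mul _)]
    refine integral_mono ((hLi.const_mul _).sub (hgi.const_mul _)) hFg fun x => ?_
    by_cases hx : x ∈ T
    swap
    · simp [hg0 x hx, hgT x hx, hφT x hx, zero_rpow (show p ≠ 0 by linarith)]
    have h1 := hab (φ x * ‖w x‖) ‖gradient φ x‖ (mul_nonneg (hφ0 x) (norm_nonneg _))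
      (norm_nonneg _)
    have h2 := mul_le_mul_of_nonneg_left (hFlow x) (rpow_nonneg (hφ0 x) p)
    have h3 : |⟪F x, gradient φ x⟫| ≤ Γ * ‖w x‖ ^ (p - 1) * ‖gradient φ x‖ :=
      (abs_real_inner_le_norm _ _).trans
        (mul_le_mul_of_nonneg_right (hFup x) (norm_nonneg _))
    have h4 : |u x * (p * φ x ^ (p - 1)) * ⟪F x, gradient φ x⟫|
        ≤ M * (p * φ x ^ (p - 1)) * (Γ * ‖w x‖ ^ (p - 1) * ‖gradient φ x‖) := by
      have h5 : 0 ≤ p * φ x ^ (p - 1) := mul_nonneg (by linarith) (rpow_nonneg (hφ0 x) _)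
      rw [abs_mul, abs_mul, abs_of_nonneg h5]
      exact mul_le_mul (mul_le_mul_of_nonneg_right (huM x (hφΩ hx)) h5) h3 (abs_nonneg _)
        (by positivity)
    have h5 := (abs_le.1 h4).1
    simp only [hg, inner_add_right, real_inner_smul_right]
    rw [mul_rpow (hφ0 x) (norm_nonneg _)] at h1 ⊢
    rw [mul_rpow (hφ0 x) (norm_nonneg _)] at h1
    linarith
  have hup : ∫ x, f x * v x ∂μ ≤ M * ∫ x in W, ‖f x‖ ∂μ := by
    refine (le_norm_self _).trans ((norm_integral_le_integral_norm _).trans ?_)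
    rw [← integral_indicator hW, ← integral_const_mul]
    refine integral_mono_of_nonneg (Eventually.of_forall fun _ => norm_nonneg _)
      (((integrable_indicator_iff hW).2 hfW.norm).const_mul _) (Eventually.of_forall fun x => ?_)
    simp only
    by_cases hx : x ∈ T
    swap
    · rw [hv0 x hx, mul_zero, norm_zero]
      exact mul_nonneg hM (indicator_nonneg (fun _ _ => norm_nonneg _) _)
    by_cases hxW : x ∈ W
    · rw [indicator_of_mem hxW, norm_mul, mul_comm]
      refine mul_le_mul_of_nonneg_right ?_ (norm_nonneg _)
      rw [hv, norm_mul, norm_of_nonneg (rpow_nonneg (hφ0 x) _)]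
      exact (mul_le_mul (huM x (hφΩ hx)) (hpow x) (rpow_nonneg (hφ0 x) _) hM).trans_eq (mul_one M)
    · simp [hv, hφW x hxW, hxW, zero_rpow (show p ≠ 0 by linarith)]
  have hG : 0 ≤ ∫ x, ‖gradient φ x‖ ^ p ∂μ := integral_nonneg fun _ => by positivity
  set I := ∫ x, (φ x * ‖w x‖) ^ p ∂μ
  set J := ∫ x, ‖gradient φ x‖ ^ p ∂μ
  set N := ∫ x in W, ‖f x‖ ∂μ
  have hfin : c / 2 * I ≤ (C₁ + M * N) * (1 + J) := by
    have := mul_nonneg (mul_nonneg hM hI) hG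
    nlinarith
  calc I = 2 / c * (c / 2 * I) := by field_simp
    _ ≤ 2 / c * ((C₁ + M * N) * (1 + J)) := by gcongr
    _ = _ := by ring

end caccioppoli

/-! ### Cutoffs of bounded energy -/

section cutoff

variable {E : Type*} [NormedAddCommGroup E] [InnerProductSpace ℝ E] [FiniteDimensional ℝ E]
  [CompleteSpace E] [MeasurableSpace E] [BorelSpace E] (μ : Measure E) [μ.IsAddHaarMeasure]

theorem norm_gradient (φ : E → ℝ) (x : E) : ‖gradient φ x‖ = ‖fderiv ℝ φ x‖ := by
  simp [gradient]

theorem integrable_norm_fderiv_rpow {φ : E → ℝ} (hφ : ContDiff ℝ 1 φ) {p : ℝ} (hp : 0 < p)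
    (hc : HasCompactSupport (fderiv ℝ φ)) : Integrable (fun x => ‖fderiv ℝ φ x‖ ^ p) μ := by
  refine Continuous.integrable_of_hasCompactSupport
    ((hφ.continuous_fderiv one_ne_zero).norm.rpow_const fun x => Or.inr hp.le) ?_
  exact hc.comp_left (g := fun y => ‖y‖ ^ p) (by simp [hp.ne'])

/-- Dilating by `R ≥ 1` multiplies the `p`-energy by `R ^ (dim E - p)`, which is at most one. -/
theorem integral_norm_fderiv_dilate_le (b : E → ℝ) {p R : ℝ} (hp : (Module.finrank ℝ E : ℝ) ≤ p)
    (hR : 1 ≤ R) :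
    ∫ x, ‖fderiv ℝ (fun y => b (R⁻¹ • y)) x‖ ^ p ∂μ ≤ ∫ x, ‖fderiv ℝ b x‖ ^ p ∂μ := by
  have hR0 : 0 < R := by linarith
  have h1 : ∀ x, ‖fderiv ℝ (fun y => b (R⁻¹ • y)) x‖ ^ p
      = (R⁻¹) ^ p * ‖fderiv ℝ b (R⁻¹ • x)‖ ^ p := by
    intro x
    rw [fderiv_comp_smul, norm_smul, mul_rpow (norm_nonneg _) (norm_nonneg _),
      norm_of_nonneg (by positivity)]
  simp_rw [h1]
  rw [integral_const_mul, Measure.integral_comp_smul μ (fun x => ‖fderiv ℝ b x‖ ^ p), smul_eq_mul,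
    ← mul_assoc]
  refine mul_le_of_le_one_left (integral_nonneg fun _ => by positivity) ?_
  rw [abs_of_pos (by positivity), ← rpow_natCast, inv_rpow hR0.le, inv_rpow hR0.le, inv_inv,
    inv_mul_le_iff₀ (by positivity), mul_one]
  exact rpow_le_rpow_of_exponent_le hR hp

/-- Cutoffs `φ` vanishing on a fixed neighborhood `V` of `K`, equal to one on an arbitrarily large
ball outside `U`, and with `p`-energy bounded independently of the ball. They are products
`(1 - θ) * b (R⁻¹ • ·)` of a fixed cutoff near `K` and a dilated bump. -/
theorem exists_cutoff {K U : Set E} (hK : IsCompact K) (hU : IsOpen U) (hKU : K ⊆ U) {p : ℝ}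
    (hp0 : 0 < p) (hp : (Module.finrank ℝ E : ℝ) ≤ p) :
    ∃ V, IsOpen V ∧ K ⊆ V ∧ ∃ D, ∀ R : ℝ, 1 ≤ R → ∃ φ : E → ℝ, ContDiff ℝ 1 φ ∧
      (∀ x, 0 ≤ φ x) ∧ (∀ x, φ x ≤ 1) ∧ HasCompactSupport φ ∧ tsupport φ ⊆ Kᶜ ∧
      (∀ x ∈ V, φ x = 0) ∧ (∀ x ∈ closedBall 0 R, x ∉ U → φ x = 1) ∧
      ∫ x, ‖gradient φ x‖ ^ p ∂μ ≤ D := by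
  obtain ⟨L₁, hL₁, hKL, hL₁U⟩ := exists_compact_between hK hU hKU
  obtain ⟨L₂, hL₂, hLL, hL₂U⟩ := exists_compact_between hL₁ hU hL₁U
  obtain ⟨θ, hθ, hθr, hθs, hθ1⟩ := exists_contMDiff_support_eq_eq_one_iff (n := 1)
    (modelWithCornersSelf ℝ E) (isOpen_interior (s := L₂)) hL₁.isClosed hLL
  have hθ : ContDiff ℝ 1 θ := hθ.contDiff
  have hθ01 : ∀ x, 0 ≤ θ x ∧ θ x ≤ 1 := fun x => hθr ⟨x, rfl⟩
  have hθc : HasCompactSupport θ := HasCompactSupport.intro hL₂ fun x hx =>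
    by_contra fun h => hx (interior_subset (hθs ▸ h))
  let b : ContDiffBump (0 : E) := ⟨1, 2, one_pos, one_lt_two⟩
  have hb : ContDiff ℝ 1 b := b.contDiff
  refine ⟨interior L₁, isOpen_interior, hKL,
    2 ^ p * (∫ x, ‖fderiv ℝ θ x‖ ^ p ∂μ + ∫ x, ‖fderiv ℝ b x‖ ^ p ∂μ), fun R hR => ?_⟩
  have hR0 : 0 < R := by linarith
  set bR : E → ℝ := fun y => b (R⁻¹ • y) with hbR
  have hbRd : ContDiff ℝ 1 bR := hb.comp (contDiff_const_smul _)
  have hbRc : HasCompactSupport bR := b.hasCompactSupport.comp_smul (inv_ne_zero hR0.ne')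
  have hφd : ContDiff ℝ 1 (fun x => (1 - θ x) * bR x) := (contDiff_const.sub hθ).mul hbRd
  have hφV : ∀ x ∈ interior L₁, (1 - θ x) * bR x = 0 := fun x hx => by
    rw [(hθ1 x).1 (interior_subset hx), sub_self, zero_mul]
  have hφc : HasCompactSupport fun x => (1 - θ x) * bR x := hbRc.mul_left
  refine ⟨fun x => (1 - θ x) * bR x, hφd, fun x => mul_nonneg (by linarith [hθ01 x]) b.nonneg,
    fun x => mul_le_one₀ (by linarith [hθ01 x]) b.nonneg b.le_one, hφc, ?_, hφV, ?_, ?_⟩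
  · have : tsupport (fun x => (1 - θ x) * bR x) ⊆ (interior L₁)ᶜ :=
      closure_minimal (fun x hx h => hx (hφV x h)) isOpen_interior.isClosed_compl
    exact this.trans (compl_subset_compl.2 hKL)
  · intro x hx hxU
    have h1 : θ x = 0 := by
      by_contra h
      exact hxU (hL₂U (interior_subset (hθs ▸ h)))
    have h2 : bR x = 1 := by
      refine b.one_of_mem_closedBall ?_
      rw [mem_closedBall_zero_iff] at hx ⊢
      rw [norm_smul, norm_of_nonneg (by positivity), inv_mul_le_iff₀ hR0]
      simpa [b] using hx
    simp only [h1, h2, sub_zero, mul_one]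
  · have hint1 := integrable_norm_fderiv_rpow μ hθ hp0 (hθc.fderiv ℝ)
    have hint2 := integrable_norm_fderiv_rpow μ hbRd hp0 (hbRc.fderiv ℝ)
    have hle : ∀ x, ‖gradient (fun x => (1 - θ x) * bR x) x‖ ^ p
        ≤ 2 ^ p * (‖fderiv ℝ θ x‖ ^ p + ‖fderiv ℝ bR x‖ ^ p) := by
      intro x
      refine le_trans ?_ (add_rpow_le hp0.le (norm_nonneg _) (norm_nonneg _))
      refine rpow_le_rpow (norm_nonneg _) ?_ hp0.le
      have hd1 : HasFDerivAt (fun x => 1 - θ x) (-fderiv ℝ θ x) x :=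
        (hθ.differentiable one_ne_zero x).hasFDerivAt.const_sub 1
      have hd2 := hd1.fun_mul (hbRd.differentiable one_ne_zero x).hasFDerivAt
      rw [norm_gradient, hd2.fderiv, add_comm]
      have h1 : ‖1 - θ x‖ ≤ 1 := by
        rw [norm_of_nonneg] <;> linarith [hθ01 x]
      have h2 : ‖bR x‖ ≤ 1 := (norm_of_nonneg b.nonneg).trans_le b.le_one
      refine (norm_add_le _ _).trans (add_le_add ?_ ?_)
      · rw [norm_smul, norm_neg]
        exact mul_le_of_le_one_left (norm_nonneg _) h2
      · rw [norm_smul]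
        exact mul_le_of_le_one_left (norm_nonneg _) h1
    calc ∫ x, ‖gradient (fun x => (1 - θ x) * bR x) x‖ ^ p ∂μ
        ≤ ∫ x, 2 ^ p * (‖fderiv ℝ θ x‖ ^ p + ‖fderiv ℝ bR x‖ ^ p) ∂μ :=
          integral_mono_of_nonneg (Eventually.of_forall fun _ => by positivity)
            ((hint1.add hint2).const_mul _) (Eventually.of_forall hle)
      _ = 2 ^ p * (∫ x, ‖fderiv ℝ θ x‖ ^ p ∂μ + ∫ x, ‖fderiv ℝ bR x‖ ^ p ∂μ) := by
          rw [integral_const_mul, integral_add hint1 hint2]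
      _ ≤ _ := by
          have := integral_norm_fderiv_dilate_le μ b hp hR
          exact mul_le_mul_of_nonneg_left (add_le_add le_rfl this) (by positivity)

end cutoff

end Stmt14

/-! ### The integrability theorem -/

/-- `L^p` integrability of the gradient outside any open
neighborhood of `K` for bounded weak solutions of `-div 𝒜(x, ∇u) = f`
in `ℝⁿ \ K`, where `f` is integrable outside any open neighborhood of `K`. -/
theorem stmt_14 (n : ℕ) (hn : 2 ≤ n) (p : ℝ) (hp : (n : ℝ) ≤ p)
    (γ Γ : ℝ) (hγ : 0 < γ) (hγΓ : γ ≤ Γ)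
    (K : Set (EuclideanSpace ℝ (Fin n))) (hK : IsCompact K)
    (𝒜 : EuclideanSpace ℝ (Fin n) → EuclideanSpace ℝ (Fin n) → EuclideanSpace ℝ (Fin n))
    (h_cont : Continuous fun q : EuclideanSpace ℝ (Fin n) × EuclideanSpace ℝ (Fin n) =>
      𝒜 q.1 q.2)
    (h_diff : ∀ x, ContDiffOn ℝ 1 (𝒜 x) ({0}ᶜ : Set (EuclideanSpace ℝ (Fin n))))
    (h_zero : ∀ x, 𝒜 x 0 = 0)
    (h_upper : ∀ x, ∀ η : EuclideanSpace ℝ (Fin n), η ≠ 0 →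
      ∑ i, ∑ j, |fderiv ℝ (𝒜 x) η (EuclideanSpace.single i 1) j| ≤ Γ * ‖η‖ ^ (p - 2))
    (h_lower : ∀ x, ∀ η : EuclideanSpace ℝ (Fin n), η ≠ 0 →
      ∀ ξ : EuclideanSpace ℝ (Fin n),
      γ * ‖ξ‖ ^ (2 : ℕ) * ‖η‖ ^ (p - 2) ≤
        ∑ i, ∑ j, fderiv ℝ (𝒜 x) η (EuclideanSpace.single i 1) j * ξ i * ξ j)
    (f : EuclideanSpace ℝ (Fin n) → ℝ)
    (hf : ∀ U : Set (EuclideanSpace ℝ (Fin n)), IsOpen U → K ⊆ U → IntegrableOn f Uᶜ)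
    (u : EuclideanSpace ℝ (Fin n) → ℝ)
    (hu_bdd : ∃ M, ∀ x ∈ Kᶜ, |u x| ≤ M)
    (hu_diff : DifferentiableOn ℝ u Kᶜ)
    (hu_loc : LocallyIntegrableOn (fun x => ‖gradient u x‖ ^ p) Kᶜ)
    (hu_weak : ∀ ψ : EuclideanSpace ℝ (Fin n) → ℝ, (∃ c : ℝ≥0, LipschitzWith c ψ) →
      HasCompactSupport ψ → tsupport ψ ⊆ Kᶜ →
      ∫ x in Kᶜ, ⟪𝒜 x (gradient u x), gradient ψ x⟫ = ∫ x in Kᶜ, f x * ψ x) :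
    ∀ U : Set (EuclideanSpace ℝ (Fin n)), IsOpen U → K ⊆ U →
      IntegrableOn (fun x => ‖gradient u x‖ ^ p) Uᶜ := by
  intro U hU hKU
  have hp2 : (2 : ℝ) ≤ p := le_trans (by exact_mod_cast hn) hp
  obtain ⟨M, hM⟩ := hu_bdd
  have hwm : Measurable (gradient u) := Stmt14.measurable_gradient u
  have hAc : ∀ x, Continuous (𝒜 x) := fun x => h_cont.comp (Continuous.prodMk_right x)
  obtain ⟨V, hV, hKV, D, hcut⟩ := Stmt14.exists_cutoff volume hK hU hKU (p := p) (by linarith)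
    (by simpa using hp)
  obtain ⟨C, hC, hcacc⟩ := Stmt14.caccioppoli (μ := volume) hK.isClosed.isOpen_compl hp2
    (c := γ / 2 * (1 / 2) ^ (p - 2)) (by positivity) (hγ.le.trans hγΓ) (le_max_right M 0)
    (F := fun x => 𝒜 x (gradient u x))
    (h_cont.measurable.comp (measurable_id.prodMk hwm)).aestronglyMeasurable
    (fun x => Stmt14.norm_le_of_fderiv_le hp2 (hAc x) (h_diff x) (h_zero x) (hγ.le.trans hγΓ)
      (h_upper x) _)
    (fun x => Stmt14.coercive_of_le_fderiv hp2 (hAc x) (h_diff x) (h_zero x) hγ (h_lower x) _)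
    hu_diff (fun x hx => (hM x hx).trans (le_max_left M 0)) hu_loc
    (fun S hS hSK => by
      simpa using hf Sᶜ hS.isClosed.isOpen_compl (subset_compl_comm.1 hSK))
    hu_weak hV.isClosed_compl.measurableSet (hf V hV hKV)
  have hcover : AECover (volume.restrict Uᶜ) Filter.atTop
      fun k : ℕ => Metric.closedBall (0 : EuclideanSpace ℝ (Fin n)) (k + 1) :=
    aecover_closedBall (Filter.tendsto_atTop_add_const_right _ _ tendsto_natCast_atTop_atTop)
  have hUc : MeasurableSet Uᶜ := hU.isClosed_compl.measurableSet
  have hmain : ∀ k : ℕ, IntegrableOn (fun x => ‖gradient u x‖ ^ p)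
      (Metric.closedBall 0 (k + 1) ∩ Uᶜ) ∧
      ∫ x in Metric.closedBall 0 (k + 1) ∩ Uᶜ, ‖gradient u x‖ ^ p ≤ C * (1 + D) := by
    intro k
    obtain ⟨φ, hφ, hφ0, hφ1, hφc, hφK, hφV, hφU, hφD⟩ := hcut (k + 1)
      (by have := k.cast_nonneg (α := ℝ); linarith)
    obtain ⟨hint, hle⟩ := hcacc φ hφ hφ0 hφ1 hφc hφK fun x hx => hφV x (not_not.1 hx)
    have hmeas : MeasurableSet (Metric.closedBall (0 : EuclideanSpace ℝ (Fin n)) (k + 1) ∩ Uᶜ) :=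
      Metric.isClosed_closedBall.measurableSet.inter hUc
    have heq : EqOn (fun x => (φ x * ‖gradient u x‖) ^ p) (fun x => ‖gradient u x‖ ^ p)
        (Metric.closedBall 0 (k + 1) ∩ Uᶜ) := fun x hx => by
      simp only [hφU x hx.1 hx.2, one_mul]
    refine ⟨hint.integrableOn.congr_fun heq hmeas, ?_⟩
    rw [← setIntegral_congr_fun hmeas heq]
    refine (setIntegral_le_integral hint (Filter.Eventually.of_forall fun x =>
      rpow_nonneg (mul_nonneg (hφ0 x) (norm_nonneg _)) _)).trans (hle.trans ?_)
    gcongr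
  refine hcover.integrable_of_integral_bounded_of_nonneg_ae (C * (1 + D)) (fun k => ?_)
    (Filter.Eventually.of_forall fun x => rpow_nonneg (norm_nonneg _) _)
    (Filter.Eventually.of_forall fun k => ?_)
  · rw [IntegrableOn, Measure.restrict_restrict Metric.isClosed_closedBall.measurableSet]
    exact (hmain k).1
  · rw [Measure.restrict_restrict Metric.isClosed_closedBall.measurableSet]
    exact (hmain k).2
end

section
/- Let n ≥ 2 be an integer, p ≥ n a real number, K ⊂ ℝⁿ a nonempty compact set, f a continuous function on ∂K, and let 𝒜 satisfy conditions (v)–(viii) as in the context with constants Γ ≥ γ > 0. If u is a bounded function on ℝⁿ\K, continuous on the closure of ℝⁿ\K, differentiable on ℝⁿ\K with |∇u|^p locally integrable, a weak solution of div 𝒜(x,∇u) = 0 in ℝⁿ\K, and u = f on ∂K, then min_{∂K} f ≤ u(x) ≤ max_{∂K} f for every x ∈ ℝⁿ\K. -/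
/-!
The proof is the truncation argument for nonlinear elliptic equations, combined with the
`p`-parabolicity of `ℝⁿ` for `p ≥ n`, which makes the point at infinity negligible.

Integrating the derivative bounds along rays gives `|𝒜(x, η)| ≤ Γ |η|^(p-1)` and
`⟪𝒜(x, η), η⟫ ≥ γ/(p-1) |η|^p` (`growth_upper`, `growth_lower`).

Let `m > max_{∂K} f` and let `s` be the positive part of `u - m`, extended by zero to `K`. It is
continuous, bounded, and vanishes near `K`. Testing the equation with `s² ηᵖ`, for a cutoff `η` at
infinity, and applying Young's inequality with a free weight `l` yields
`2c ∫ s |∇u|^p ηᵖ ≤ C₁ l ∫_{∇η ≠ 0} s |∇u|^p ηᵖ + C₂ l^(1-p) ∫ |∇η|^p` (`caccioppoli`).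
The solution is only assumed differentiable, so the test function is differentiable with gradient
in `L^p` but need not be Lipschitz; `weak_extend` passes to such test functions by mollification.

Because `p ≥ n`, dyadic cutoffs have uniformly bounded energy `∫ |∇η|^p` (`exists_cutoff`). With `l`
small the estimate bounds the energies `a_k` of `s` on the balls of radius `2^k`; with `l`
arbitrary it reads `2c a_k ≤ C₁ l (a_{k+1} - a_k) + C₃ l^(1-p)`, and letting `k → ∞`, then `l → ∞`,
forces all of them to vanish (`holeFilling`). So `∇(s²) = 2 s ∇u` is zero almost everywhere, `s²` is
constant (`const_of_gradient_ae_zero`), and since `s = 0` on `K`, it is zero everywhere: `u ≤ m`.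

The lower bound is the upper bound for `-u` with the flux `-𝒜(x, ∇u)`.
-/

open Real MeasureTheory Set
open scoped RealInnerProductSpace NNReal

/-! ### Mollification and the weak formulation -/

section Mollify

open Topology Filter
open scoped Convolution ENNReal

variable {E : Type*} [NormedAddCommGroup E] [InnerProductSpace ℝ E] [FiniteDimensional ℝ E]
  [MeasurableSpace E] [BorelSpace E]

/-- An everywhere differentiable function with locally integrable gradient satisfies
`∇(ρ * φ) = ρ * ∇φ`. No continuity of `∇φ` is assumed; the integration by parts is the one for
everywhere differentiable functions with integrable derivative. -/
theorem hasGradientAt_mollify (ρ : ContDiffBump (0 : E)) {φ : E → ℝ} {G : E → E}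
    (hφ : ∀ x, HasGradientAt φ (G x) x) (hG : LocallyIntegrable G) (x : E) :
    HasGradientAt (ρ.normed volume ⋆[ContinuousLinearMap.lsmul ℝ ℝ, volume] φ)
      (∫ t, ρ.normed volume t • G (x - t)) x := by
  have hφd : ∀ x, HasFDerivAt φ (InnerProductSpace.toDual ℝ E (G x)) x :=
    fun x => hasGradientAt_iff_hasFDerivAt.1 (hφ x)
  have hφc : Continuous φ := continuous_iff_continuousAt.2 fun x => (hφd x).continuousAt
  have hρs : ContDiff ℝ 1 (ρ.normed volume) := ρ.contDiff_normed
  have hρc : HasCompactSupport (ρ.normed volume) := ρ.hasCompactSupport_normed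
  have hGx := hρc.convolutionExists_left (ContinuousLinearMap.lsmul ℝ ℝ) hρs.continuous hG x
  have h := hρc.hasFDerivAt_convolution_left (μ := volume) (ContinuousLinearMap.lsmul ℝ ℝ) hρs
    hφc.locallyIntegrable x
  rw [hasGradientAt_iff_hasFDerivAt]
  suffices hE : InnerProductSpace.toDual ℝ E (∫ t, ρ.normed volume t • G (x - t)) =
      (fderiv ℝ (ρ.normed volume) ⋆[ContinuousLinearMap.precompL E
        (ContinuousLinearMap.lsmul ℝ ℝ), volume] φ) x by
    rw [hE]
    exact h
  ext w
  have hρ' : HasCompactSupport (fderiv ℝ (ρ.normed volume)) := hρc.fderiv ℝ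
  have hρ'c : Continuous (fderiv ℝ (ρ.normed volume)) := hρs.continuous_fderiv (by norm_num)
  have hex := hρ'.convolutionExists_left (μ := (volume : Measure E)) ((ContinuousLinearMap.lsmul ℝ ℝ :
    ℝ →L[ℝ] ℝ →L[ℝ] ℝ).precompL E) hρ'c
    hφc.locallyIntegrable x
  rw [convolution_def, ContinuousLinearMap.integral_apply hex]
  simp only [ContinuousLinearMap.precompL_apply, ContinuousLinearMap.lsmul_apply,
    InnerProductSpace.toDual_apply_apply]
  have hGi : Integrable (fun t => ρ.normed volume t • G (x - t)) := hGx
  rw [real_inner_comm, ← integral_inner hGi]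
  have hψ : ∀ t, HasFDerivAt (fun t => φ (x - t))
      (-(InnerProductSpace.toDual ℝ E (G (x - t)))) t := by
    intro t
    have := (hφd (x - t)).comp t ((hasFDerivAt_id t).const_sub x)
    have e : (InnerProductSpace.toDual ℝ E (G (x - t))).comp (-ContinuousLinearMap.id ℝ E) =
        -(InnerProductSpace.toDual ℝ E (G (x - t))) := by
      ext v; simp
    rw [e] at this
    exact this
  have key := integral_bilinear_hasFDerivAt_right_eq_neg_left_of_integrable
    (μ := (volume : Measure E)) (B := ContinuousLinearMap.lsmul ℝ ℝ)
    (f := ρ.normed volume) (f' := fderiv ℝ (ρ.normed volume)) (g := fun t => φ (x - t))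
    (g' := fun t => -(InnerProductSpace.toDual ℝ E (G (x - t)))) (v := w) ?_ ?_ ?_ ?_ ?_
  · simp only [ContinuousLinearMap.lsmul_apply, neg_apply, smul_eq_mul,
      mul_neg, integral_neg, neg_inj, InnerProductSpace.toDual_apply_apply] at key
    simp only [smul_eq_mul]
    rw [← key]
    congr 1; ext t
    rw [real_inner_smul_right, real_inner_comm]
  · have := hex.apply_continuousLinearMap w
    simpa using this
  · have := (hGi.inner_const (𝕜 := ℝ) w).neg
    refine this.congr (Eventually.of_forall fun t => ?_)
    simp [real_inner_smul_left]
  · exact hρc.convolutionExists_left (ContinuousLinearMap.lsmul ℝ ℝ) hρs.continuous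
      hφc.locallyIntegrable x
  · intro t _
    exact (hρs.differentiable (by norm_num) t).hasFDerivAt
  · intro t _
    exact hψ t

variable {F₁ F₂ W : Type*} [NormedAddCommGroup F₁] [NormedSpace ℝ F₁] [NormedAddCommGroup F₂]
  [NormedSpace ℝ F₂] [NormedAddCommGroup W] [NormedSpace ℝ W] [CompleteSpace W]

/-- The pairing of an `L^q` function with the translates of an `L^p` function is continuous in the
translation, since translation is continuous in `L^p` for `p < ∞`. -/
theorem continuous_pairing (L : F₁ →L[ℝ] F₂ →L[ℝ] W) {p q : ℝ≥0∞} [q.HolderConjugate p]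
    (hp1 : 1 ≤ p) (hq1 : 1 ≤ q) (hp : p ≠ ∞) {B : E → F₁} {G : E → F₂}
    (hB : MemLp B q volume) (hG : MemLp G p volume) :
    Continuous fun t : E => ∫ x, L (B x) (G (x - t)) := by
  have : Fact (1 ≤ p) := ⟨hp1⟩
  have : Fact (1 ≤ q) := ⟨hq1⟩
  have : Fact (p ≠ ∞) := ⟨hp⟩
  have h1 : Continuous fun t : E => DomAddAct.mk (-t) +ᵥ hG.toLp G := by
    have hmk : Continuous fun t : E => DomAddAct.mk (-t) :=
      DomAddAct.continuous_mk.comp continuous_neg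
    exact hmk.vadd continuous_const
  have h2 := (L.lpPairing volume q p (hB.toLp B)).continuous.comp h1
  refine h2.congr fun t => ?_
  simp only [Function.comp]
  rw [ContinuousLinearMap.lpPairing_eq_integral, DomAddAct.mk_vadd_toLp]
  refine integral_congr_ae ?_
  filter_upwards [hB.coeFn_toLp, (hG.comp_measurePreserving
    (measurePreserving_vadd (-t) (volume : Measure E))).coeFn_toLp] with x h1 h2
  rw [h1]
  change L (B x) ((MemLp.toLp (G ∘ fun x => -t +ᵥ x) _ : E → F₂) x) = _
  rw [h2, Function.comp]
  congr 2
  simp [sub_eq_add_neg, add_comm]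

/-- Fubini: pairing `B` with the mollification `ρ * G` averages, with weight `ρ`, the pairings of `B`
with the translates of `G`. -/
theorem integral_pairing_mollify {p q : ℝ≥0∞} [q.HolderConjugate p]
    (hp1 : 1 ≤ p) (hq1 : 1 ≤ q) (hp : p ≠ ∞) {B G : E → E}
    (hB : MemLp B q volume) (hG : MemLp G p volume) (ρ : ContDiffBump (0 : E)) :
    ∫ x, ⟪B x, ∫ t, ρ.normed volume t • G (x - t)⟫ =
      ∫ t, ρ.normed volume t • ∫ x, ⟪B x, G (x - t)⟫ := by
  have hρs : Continuous (ρ.normed (volume : Measure E)) := ρ.continuous_normed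
  have hρc : HasCompactSupport (ρ.normed (volume : Measure E)) := ρ.hasCompactSupport_normed
  have hGl : LocallyIntegrable G := hG.locallyIntegrable hp1
  have hGt : ∀ t, MemLp (fun x => G (x - t)) p volume := fun t =>
    hG.comp_measurePreserving (measurePreserving_sub_right volume t)
  have hI : Integrable (fun z : E × E => ρ.normed volume z.1 * ⟪B z.2, G (z.2 - z.1)⟫)
      (volume.prod volume) := by
    have hmG : AEStronglyMeasurable (fun z : E × E => G (z.2 - z.1)) (volume.prod volume) := by
      have h1 : AEStronglyMeasurable (fun z : E × E => G (z.1 - z.2)) (volume.prod volume) :=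
        hG.1.comp_quasiMeasurePreserving (quasiMeasurePreserving_sub volume volume)
      exact h1.comp_quasiMeasurePreserving Measure.measurePreserving_swap.quasiMeasurePreserving
    have hm : AEStronglyMeasurable
        (fun z : E × E => ρ.normed volume z.1 * ⟪B z.2, G (z.2 - z.1)⟫) (volume.prod volume) :=
      (hρs.comp continuous_fst).aestronglyMeasurable.mul
        ((hB.1.comp_snd).inner hmG)
    rw [integrable_prod_iff hm]
    have hin : ∀ t, Integrable (fun x => ‖B x‖ * ‖G (x - t)‖) := fun t =>
      hB.norm.integrable_mul (hGt t).norm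
    constructor
    · refine Eventually.of_forall fun t => ?_
      refine Integrable.const_mul (c := ρ.normed volume t) ?_
      refine (hin t).mono (hB.1.inner (hGt t).1) (Eventually.of_forall fun x => ?_)
      simpa using abs_real_inner_le_norm (B x) (G (x - t))
    · have hc : Continuous fun t => ρ.normed volume t * ∫ x, ‖B x‖ * ‖G (x - t)‖ :=
        hρs.mul (by
          simpa using continuous_pairing (ContinuousLinearMap.mul ℝ ℝ) hp1 hq1 hp hB.norm hG.norm)
      have hci : Integrable fun t => ρ.normed volume t * ∫ x, ‖B x‖ * ‖G (x - t)‖ :=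
        hc.integrable_of_hasCompactSupport hρc.mul_right
      refine hci.mono hm.norm.integral_prod_right' (Eventually.of_forall fun t => ?_)
      have hρ0 : 0 ≤ ρ.normed volume t := ρ.nonneg_normed t
      rw [Real.norm_of_nonneg (integral_nonneg fun _ => norm_nonneg _), Real.norm_of_nonneg
        (mul_nonneg hρ0 (integral_nonneg fun _ => by positivity)), ← integral_const_mul]
      refine integral_mono_of_nonneg (Eventually.of_forall fun _ => norm_nonneg _)
        ((hin t).const_mul _) (Eventually.of_forall fun x => ?_)
      simp only [norm_mul, Real.norm_eq_abs, abs_of_nonneg hρ0]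
      gcongr
      exact abs_real_inner_le_norm (B x) (G (x - t))
  have hsw := integral_integral_swap (f := fun t x => ρ.normed volume t * ⟪B x, G (x - t)⟫) hI
  simp only [integral_const_mul] at hsw
  simp only [smul_eq_mul]
  rw [hsw]
  congr 1; ext x
  have hGi : Integrable (fun t => ρ.normed volume t • G (x - t)) :=
    hρc.convolutionExists_left (ContinuousLinearMap.lsmul ℝ ℝ) hρs hGl x
  rw [← integral_inner hGi]
  simp only [real_inner_smul_right]

/-- A continuous function whose averages against all narrow bumps at `0` vanish is zero at `0`. -/
theorem eq_zero_of_mollify {H : E → ℝ} (hH : Continuous H) {δ : ℝ} (hδ : 0 < δ)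
    (h : ∀ ρ : ContDiffBump (0 : E), ρ.rOut < δ → ∫ t, ρ.normed volume t • H t = 0) :
    H 0 = 0 := by
  let r : ℕ → ContDiffBump (0 : E) := fun k =>
    ⟨δ / 4 / (k + 1), δ / 2 / (k + 1), by positivity, by gcongr; norm_num⟩
  have hr : Tendsto (fun k => (r k).rOut) atTop (𝓝 0) := by
    simpa [r, div_eq_mul_inv] using
      (tendsto_one_div_add_atTop_nhds_zero_nat (𝕜 := ℝ)).const_mul (δ / 2)
  have := ContDiffBump.convolution_tendsto_right_of_continuous (μ := (volume : Measure E)) hr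
    (hH.comp continuous_neg) 0
  simp only [convolution_def, Function.comp, zero_sub, neg_neg, neg_zero,
    ContinuousLinearMap.lsmul_apply] at this
  refine tendsto_nhds_unique this ?_
  have h0 : ∀ k, ∫ t, (r k).normed volume t • H t = 0 := fun k => h _ (by
    simp only [r]
    rw [div_lt_iff₀ (by positivity)]
    nlinarith [Nat.cast_nonneg (α := ℝ) k, mul_nonneg hδ.le (Nat.cast_nonneg (α := ℝ) k)])
  simp only [h0, tendsto_const_nhds_iff]

/-- A differentiable function whose gradient vanishes almost everywhere is constant: its
mollifications have zero gradient, hence are constant, and they converge pointwise to it. -/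
theorem const_of_gradient_ae_zero {φ : E → ℝ} {G : E → E}
    (hφ : ∀ x, HasGradientAt φ (G x) x) (hG : G =ᵐ[volume] 0) (x y : E) : φ x = φ y := by
  have hφc : Continuous φ := continuous_iff_continuousAt.2 fun x => (hφ x).continuousAt
  have hGl : LocallyIntegrable G :=
    ((locallyIntegrable_zero).congr hG.symm)
  let r : ℕ → ContDiffBump (0 : E) := fun k =>
    ⟨1 / (k + 1) / 2, 1 / (k + 1), by positivity, by
      have : (0 : ℝ) < 1 / (k + 1) := by positivity
      linarith⟩
  have hr : Tendsto (fun k => (r k).rOut) atTop (𝓝 0) := by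
    simpa [r, div_eq_mul_inv] using tendsto_one_div_add_atTop_nhds_zero_nat (𝕜 := ℝ)
  have hT := fun z => ContDiffBump.convolution_tendsto_right_of_continuous
    (μ := (volume : Measure E)) hr hφc z
  refine tendsto_nhds_unique (hT x) ((hT y).congr fun k => ?_)
  refine is_const_of_fderiv_eq_zero (𝕜 := ℝ) ?_ ?_ y x
  · exact fun z => (hasGradientAt_mollify (r k) hφ hGl z).differentiableAt
  · intro z
    have h1 := hasGradientAt_mollify (r k) hφ hGl z
    have h2 : ∫ t, (r k).normed volume t • G (z - t) = 0 := by
      refine integral_eq_zero_of_ae ?_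
      have := (quasiMeasurePreserving_sub_left (volume : Measure E) z).ae_eq_comp hG
      filter_upwards [this] with t ht
      simp only [Function.comp] at ht
      simp [ht]
    rw [h2] at h1
    simpa using (hasGradientAt_iff_hasFDerivAt.1 h1).fderiv

theorem gradient_eq_zero_of_notMem {F : Type*} [NormedAddCommGroup F] [InnerProductSpace ℝ F]
    [CompleteSpace F] {φ : F → ℝ} {x : F} (hx : x ∉ tsupport φ) :
    gradient φ x = 0 := by
  have h : fderiv ℝ φ x = 0 := by
    by_contra h
    exact hx (support_fderiv_subset ℝ h)
  simp [gradient, h]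

theorem setIntegral_inner_eq {Ω S : Set E} {b g : E → E} (hΩ : MeasurableSet Ω) (hS : S ⊆ Ω)
    (hg : ∀ x ∉ S, g x = 0) : ∫ x in Ω, ⟪b x, g x⟫ = ∫ x, ⟪S.indicator b x, g x⟫ := by
  rw [← integral_indicator hΩ]
  congr 1; ext x
  by_cases hxS : x ∈ S
  · simp [hxS, hS hxS]
  · simp [hxS, hg x hxS]

/-- The weak formulation, assumed for Lipschitz test functions only, also holds for test functions
that are merely everywhere differentiable with gradient in `L^p`. The mollified test functions are
Lipschitz and supported in `Ω`, and the pairing with the flux `b` depends continuously on the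
translation parameter. -/
theorem weak_extend {Ω : Set E} (hΩ : IsOpen Ω) {b : E → E} {p q : ℝ≥0∞} [q.HolderConjugate p]
    (hp1 : 1 ≤ p) (hq1 : 1 ≤ q) (hp : p ≠ ∞)
    (hb : ∀ S ⊆ Ω, IsCompact S → MemLp (S.indicator b) q volume)
    (hweak : ∀ ψ : E → ℝ, (∃ c : ℝ≥0, LipschitzWith c ψ) →
      HasCompactSupport ψ → tsupport ψ ⊆ Ω → ∫ x in Ω, ⟪b x, gradient ψ x⟫ = 0)
    {φ : E → ℝ} {G : E → E} (hφ : ∀ x, HasGradientAt φ (G x) x) (hc : HasCompactSupport φ)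
    (hs : tsupport φ ⊆ Ω) (hG : MemLp G p volume) : ∫ x in Ω, ⟪b x, G x⟫ = 0 := by
  obtain ⟨δ, hδ, hδΩ⟩ := IsCompact.exists_cthickening_subset_open hc hΩ hs
  set S := Metric.cthickening δ (tsupport φ) with hS
  have hSc : IsCompact S := IsCompact.cthickening hc
  have hφc : Continuous φ := continuous_iff_continuousAt.2 fun x => (hφ x).continuousAt
  have hG0 : ∀ x ∉ S, G x = 0 := fun x hx => by
    rw [← (hφ x).gradient]
    exact gradient_eq_zero_of_notMem fun h => hx (Metric.self_subset_cthickening _ h)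
  have hB := hb S hδΩ hSc
  rw [setIntegral_inner_eq hΩ.measurableSet hδΩ hG0]
  have hH := continuous_pairing (innerSL ℝ) hp1 hq1 hp hB hG
  replace hH : Continuous fun t : E => ∫ x, ⟪S.indicator b x, G (x - t)⟫ := hH
  -- it suffices that the mollified pairings vanish for every narrow mollifier
  have := eq_zero_of_mollify hH hδ fun ρ hρ => ?_
  · simpa using this
  rw [← integral_pairing_mollify hp1 hq1 hp hB hG ρ]
  set ψ : E → ℝ := ρ.normed volume ⋆[ContinuousLinearMap.lsmul ℝ ℝ, volume] φ with hψ
  have hgr : ∀ x, HasGradientAt ψ (∫ t, ρ.normed volume t • G (x - t)) x := fun x =>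
    hasGradientAt_mollify ρ hφ (hG.locallyIntegrable hp1) x
  have hsupp : tsupport ψ ⊆ S := by
    refine closure_minimal ?_ Metric.isClosed_cthickening
    intro x hx
    have hx' := support_convolution_subset _ hx
    obtain ⟨t, ht, y, hy, rfl⟩ := hx'
    rw [ρ.support_normed_eq, Metric.mem_ball, dist_zero_right] at ht
    refine Metric.mem_cthickening_of_dist_le _ y δ _ (subset_tsupport _ hy) ?_
    simpa [dist_eq_norm] using (ht.trans hρ).le
  have hψc : HasCompactSupport ψ := hSc.of_isClosed_subset (isClosed_tsupport _) hsupp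
  have hψs : ContDiff ℝ 1 ψ :=
    ρ.hasCompactSupport_normed.contDiff_convolution_left (n := 1) _ ρ.contDiff_normed
      hφc.locallyIntegrable
  have h0 := hweak ψ (ContDiff.lipschitzWith_of_hasCompactSupport hψc hψs (by norm_num)) hψc
    (hsupp.trans hδΩ)
  rw [setIntegral_inner_eq (S := S) hΩ.measurableSet hδΩ
    (fun x hx => gradient_eq_zero_of_notMem fun h => hx (hsupp h))] at h0
  rw [← h0]
  congr 1; ext x
  rw [(hgr x).gradient]

end Mollify

/-! ### Growth and coercivity of the operator -/

section Structure

variable {n : ℕ} {p γ Γ : ℝ} {a : EuclideanSpace ℝ (Fin n) → EuclideanSpace ℝ (Fin n)}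

theorem euclidean_eq_sum (ξ : EuclideanSpace ℝ (Fin n)) :
    ξ = ∑ i, ξ i • EuclideanSpace.single i (1 : ℝ) := by
  ext j
  simp [Finset.sum_apply, Pi.single_apply]

theorem norm_le_sum_abs (ξ : EuclideanSpace ℝ (Fin n)) : ‖ξ‖ ≤ ∑ i, |ξ i| := by
  conv_lhs => rw [euclidean_eq_sum ξ]
  refine (norm_sum_le _ _).trans (Finset.sum_le_sum fun i _ => ?_)
  simp [norm_smul]

/-- The operator norm is bounded by the sum of the absolute values of the matrix entries. -/
theorem norm_map_le (T : EuclideanSpace ℝ (Fin n) →L[ℝ] EuclideanSpace ℝ (Fin n))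
    (ξ : EuclideanSpace ℝ (Fin n)) :
    ‖T ξ‖ ≤ (∑ i, ∑ j, |T (EuclideanSpace.single i 1) j|) * ‖ξ‖ := by
  conv_lhs => rw [euclidean_eq_sum ξ]
  rw [map_sum, Finset.sum_mul]
  refine (norm_sum_le _ _).trans (Finset.sum_le_sum fun i _ => ?_)
  rw [map_smul, norm_smul, mul_comm]
  gcongr
  · exact norm_le_sum_abs _
  · exact PiLp.norm_apply_le ξ i

/-- The quadratic form of the matrix of partial derivatives is `⟪T ξ, ξ⟫`. -/
theorem inner_map_eq (T : EuclideanSpace ℝ (Fin n) →L[ℝ] EuclideanSpace ℝ (Fin n))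
    (ξ : EuclideanSpace ℝ (Fin n)) :
    ∑ i, ∑ j, T (EuclideanSpace.single i 1) j * ξ i * ξ j = ⟪T ξ, ξ⟫ := by
  conv_rhs => rw [euclidean_eq_sum ξ, map_sum, ← euclidean_eq_sum ξ]
  rw [sum_inner]
  refine Finset.sum_congr rfl fun i _ => ?_
  simp only [map_smul, PiLp.inner_apply, PiLp.smul_apply, smul_eq_mul, RCLike.inner_apply,
    conj_trivial]
  refine Finset.sum_congr rfl fun j _ => ?_
  ring

theorem hasDerivAt_ray (hd : ContDiffOn ℝ 1 a ({0}ᶜ : Set (EuclideanSpace ℝ (Fin n))))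
    {η : EuclideanSpace ℝ (Fin n)} (hη : η ≠ 0) {t : ℝ} (ht : t ≠ 0) :
    HasDerivAt (fun s : ℝ => a (s • η)) (fderiv ℝ a (t • η) η) t := by
  have h0 : t • η ≠ 0 := smul_ne_zero ht hη
  have h1 : HasFDerivAt a (fderiv ℝ a (t • η)) (t • η) :=
    ((hd.differentiableOn (by norm_num)).differentiableAt
      (isOpen_compl_singleton.mem_nhds h0)).hasFDerivAt
  have h2 : HasDerivAt (fun s : ℝ => s • η) η t := by
    simpa using (hasDerivAt_id t).smul_const η
  exact h1.comp_hasDerivAt t h2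

/-- `|𝒜(x, η)| ≤ Γ |η|^(p-1)`, by integrating the bound on the derivative along the ray from `0`
to `η`. The ray is run backwards, `t ↦ (1 - t) η`, so that the singular point is the right
endpoint, where no derivative is needed. -/
theorem growth_upper (hp : 2 ≤ p) (hc : Continuous a)
    (hd : ContDiffOn ℝ 1 a ({0}ᶜ : Set (EuclideanSpace ℝ (Fin n)))) (h0 : a 0 = 0) (hΓ : 0 ≤ Γ)
    (hu : ∀ η : EuclideanSpace ℝ (Fin n), η ≠ 0 →
      ∑ i, ∑ j, |fderiv ℝ a η (EuclideanSpace.single i 1) j| ≤ Γ * ‖η‖ ^ (p - 2))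
    (η : EuclideanSpace ℝ (Fin n)) : ‖a η‖ ≤ Γ * ‖η‖ ^ (p - 1) := by
  rcases eq_or_ne η 0 with rfl | hη
  · rw [h0, norm_zero]; positivity
  have hη' : 0 < ‖η‖ := norm_pos_iff.2 hη
  have hder : ∀ t ∈ Ico (0 : ℝ) 1, HasDerivWithinAt (fun s : ℝ => a ((1 - s) • η))
      (-(fderiv ℝ a ((1 - t) • η) η)) (Ici t) t := by
    intro t ht
    have h1 : 1 - t ≠ 0 := by linarith [ht.2]
    have := (hasDerivAt_ray hd hη h1).scomp t ((hasDerivAt_id t).const_sub 1)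
    simpa [Function.comp_def] using this.hasDerivWithinAt
  have hcont : Continuous (fun s : ℝ => a ((1 - s) • η)) := by fun_prop
  have := norm_image_sub_le_of_norm_deriv_right_le_segment (C := Γ * ‖η‖ ^ (p - 1))
    hcont.continuousOn hder ?_ 1 (by simp)
  · simpa [h0] using this
  · intro t ht
    have h1 : 0 < 1 - t := by linarith [ht.2]
    rw [norm_neg]
    refine (norm_map_le _ _).trans ?_
    refine (mul_le_mul_of_nonneg_right (hu _ (smul_ne_zero h1.ne' hη)) (norm_nonneg _)).trans ?_
    rw [norm_smul, Real.norm_of_nonneg h1.le, Real.mul_rpow h1.le (norm_nonneg _),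
      show p - 1 = (p - 2) + 1 by ring, Real.rpow_add_one hη'.ne']
    have h2 : (1 - t) ^ (p - 2) ≤ 1 := Real.rpow_le_one h1.le (by linarith [ht.1]) (by linarith)
    have h3 : 0 ≤ Γ * (‖η‖ ^ (p - 2) * ‖η‖) := by positivity
    nlinarith

/-- `⟪𝒜(x, η), η⟫ ≥ γ / (p - 1) |η|^p`: the function
`t ↦ ⟪𝒜(x, t η), η⟫ - γ / (p - 1) |η|^p t^(p-1)` is nondecreasing on `[0, 1]` by ellipticity. -/
theorem growth_lower (hp : 2 ≤ p) (hc : Continuous a)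
    (hd : ContDiffOn ℝ 1 a ({0}ᶜ : Set (EuclideanSpace ℝ (Fin n)))) (h0 : a 0 = 0)
    (hl : ∀ η : EuclideanSpace ℝ (Fin n), η ≠ 0 → ∀ ξ : EuclideanSpace ℝ (Fin n),
      γ * ‖ξ‖ ^ (2 : ℕ) * ‖η‖ ^ (p - 2) ≤
        ∑ i, ∑ j, fderiv ℝ a η (EuclideanSpace.single i 1) j * ξ i * ξ j)
    (η : EuclideanSpace ℝ (Fin n)) : γ / (p - 1) * ‖η‖ ^ p ≤ ⟪a η, η⟫ := by
  have hp1 : 0 < p - 1 := by linarith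
  rcases eq_or_ne η 0 with rfl | hη
  · simp [Real.zero_rpow (by linarith : p ≠ 0)]
  have hη' : 0 < ‖η‖ := norm_pos_iff.2 hη
  let k : ℝ → ℝ := fun t => ⟪a (t • η), η⟫ - γ / (p - 1) * ‖η‖ ^ p * t ^ (p - 1)
  have hk : ∀ t ∈ interior (Icc (0 : ℝ) 1), HasDerivAt k
      (⟪fderiv ℝ a (t • η) η, η⟫ - γ / (p - 1) * ‖η‖ ^ p * ((p - 1) * t ^ (p - 1 - 1))) t := by
    intro t ht
    rw [interior_Icc] at ht
    refine HasDerivAt.sub ?_ ?_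
    · simpa using (hasDerivAt_ray hd hη ht.1.ne').inner ℝ (hasDerivAt_const t η)
    · exact (Real.hasDerivAt_rpow_const (Or.inl ht.1.ne')).const_mul _
  have hmono : MonotoneOn k (Icc 0 1) := by
    refine monotoneOn_of_deriv_nonneg (convex_Icc 0 1) ?_ ?_ ?_
    · refine Continuous.continuousOn ?_
      refine Continuous.sub (by fun_prop) (continuous_const.mul ?_)
      exact Real.continuous_rpow_const hp1.le
    · exact fun t ht => (hk t ht).differentiableAt.differentiableWithinAt
    · intro t ht
      rw [(hk t ht).deriv, sub_nonneg, ← inner_map_eq]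
      rw [interior_Icc] at ht
      refine le_trans (le_of_eq ?_) (hl (t • η) (smul_ne_zero ht.1.ne' hη) η)
      rw [norm_smul, Real.norm_of_nonneg ht.1.le, Real.mul_rpow ht.1.le (norm_nonneg _)]
      have e : ‖η‖ ^ p = ‖η‖ ^ (2 : ℕ) * ‖η‖ ^ (p - 2) := by
        rw [← Real.rpow_natCast, ← Real.rpow_add hη']; norm_num
      rw [e, show p - 1 - 1 = p - 2 by ring]
      field_simp
  have := hmono (by simp) (by simp) (zero_le_one (α := ℝ))
  simp only [k, zero_smul, h0, inner_zero_left, Real.zero_rpow hp1.ne', one_smul,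
    Real.one_rpow] at this
  linarith

end Structure

/-! ### Energy estimates -/

section Caccioppoli

open Topology Filter
open scoped ENNReal

variable {E : Type*} [NormedAddCommGroup E] [InnerProductSpace ℝ E] [FiniteDimensional ℝ E]
  [MeasurableSpace E] [BorelSpace E]

/-- A form of Young's inequality with a free weight `l`. It follows from comparing `b` with `l a`. -/
theorem young_weighted {p a b l : ℝ} (hp : 1 < p) (ha : 0 ≤ a) (hb : 0 ≤ b) (hl : 0 < l) :
    a ^ (p - 1) * b ≤ l * a ^ p + l ^ (1 - p) * b ^ p := by
  have hap : 0 ≤ a ^ p := Real.rpow_nonneg ha _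
  have hbp : 0 ≤ b ^ p := Real.rpow_nonneg hb _
  have hlp : 0 ≤ l ^ (1 - p) := Real.rpow_nonneg hl.le _
  have split : ∀ z : ℝ, 0 ≤ z → z ^ p = z ^ (p - 1) * z := fun z hz => by
    rcases hz.eq_or_lt with rfl | hz
    · simp [Real.zero_rpow (by linarith : p ≠ 0)]
    · rw [← Real.rpow_add_one hz.ne']; norm_num
  rcases le_total b (l * a) with h | h
  · have : a ^ (p - 1) * b ≤ a ^ (p - 1) * (l * a) := by gcongr
    have e := split a ha
    nlinarith [mul_nonneg hlp hbp]
  · have h1 : a ≤ b / l := by rw [le_div_iff₀ hl]; linarith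
    have h2 : a ^ (p - 1) ≤ (b / l) ^ (p - 1) := Real.rpow_le_rpow ha h1 (by linarith)
    have h3 : (b / l) ^ (p - 1) * b = l ^ (1 - p) * b ^ p := by
      rw [Real.div_rpow hb hl.le, split b hb, show 1 - p = -(p - 1) by ring,
        Real.rpow_neg hl.le]
      ring
    nlinarith [mul_nonneg hl.le hap, mul_le_mul_of_nonneg_right h2 hb]

theorem memLp_indicator_of_integrableOn {p : ℝ} (hp : 1 ≤ p) {P : E → E} (hP : Measurable P)
    {S : Set E} (hS : MeasurableSet S) (hi : IntegrableOn (fun x => ‖P x‖ ^ p) S) :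
    MemLp (S.indicator P) (ENNReal.ofReal p) volume := by
  rw [memLp_indicator_iff_restrict hS]
  rw [← integrable_norm_rpow_iff hP.aestronglyMeasurable (by simp; linarith) ENNReal.ofReal_ne_top,
    ENNReal.toReal_ofReal (by linarith)]
  exact hi

/-- The flux `b`, of size `|P|^(p-1)`, lies in the dual space `L^(p/(p-1))` wherever `|P|^p` is
integrable. -/
theorem memLp_flux {p Γ : ℝ} (hp : 2 ≤ p) {P b : E → E}
    (hb : Measurable b) (hbP : ∀ x, ‖b x‖ ≤ Γ * ‖P x‖ ^ (p - 1))
    {S : Set E} (hS : MeasurableSet S) (hi : IntegrableOn (fun x => ‖P x‖ ^ p) S) :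
    MemLp (S.indicator b) (ENNReal.ofReal (p / (p - 1))) volume := by
  have hp1 : 0 < p - 1 := by linarith
  refine memLp_indicator_of_integrableOn ?_ hb hS ?_
  · rw [le_div_iff₀ hp1]; linarith
  · refine (hi.const_mul (|Γ| ^ (p / (p - 1)))).mono
      (by fun_prop : Measurable fun x => ‖b x‖ ^ (p / (p - 1))).aestronglyMeasurable
      (Eventually.of_forall fun x => ?_)
    have e : |Γ| ^ (p / (p - 1)) * ‖P x‖ ^ p = (|Γ| * ‖P x‖ ^ (p - 1)) ^ (p / (p - 1)) := by
      rw [Real.mul_rpow (abs_nonneg _) (by positivity), ← Real.rpow_mul (norm_nonneg _),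
        mul_div_cancel₀ _ hp1.ne']
    rw [e, Real.norm_of_nonneg (by positivity), Real.norm_of_nonneg (by positivity)]
    refine Real.rpow_le_rpow (norm_nonneg _) ((hbP x).trans ?_) (by positivity)
    gcongr
    exact le_abs_self Γ

theorem holderConj {p : ℝ} (hp : 2 ≤ p) :
    (ENNReal.ofReal (p / (p - 1))).HolderConjugate (ENNReal.ofReal p) :=
  (Real.HolderConjugate.conjExponent (by linarith : 1 < p)).symm.ennrealOfReal

/-- Caccioppoli estimate. Here `b` is the flux `𝒜(x, ∇u)`, `P` is `∇u`, and `s` is the positive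
part of `u - m`, which vanishes off a closed set `T ⊆ Ω`; `η` is a cutoff with gradient `N`. The
test function is `s² ηᵖ`. The square is there because `s` itself need not be differentiable at the
zeros of `u - m`, whereas `s²` is, with gradient `2 s P`. The weight `l` from Young's inequality is
kept free, and the energy on the right is taken only over `{∇η ≠ 0}`. -/
theorem caccioppoli {p c Γ L l M : ℝ} (hp : 2 ≤ p) (hΓ : 0 ≤ Γ) (hL : 0 ≤ L)
    (hl : 0 < l) {Ω T : Set E} (hΩ : IsOpen Ω) (hT : IsClosed T) (hTΩ : T ⊆ Ω)
    {P b : E → E} (hP : Measurable P) (hb : Measurable b)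
    (hPi : LocallyIntegrableOn (fun x => ‖P x‖ ^ p) Ω)
    (hbu : ∀ x, ‖b x‖ ≤ Γ * ‖P x‖ ^ (p - 1)) (hbl : ∀ x, c * ‖P x‖ ^ p ≤ ⟪b x, P x⟫)
    (hweak : ∀ ψ : E → ℝ, (∃ c : ℝ≥0, LipschitzWith c ψ) →
      HasCompactSupport ψ → tsupport ψ ⊆ Ω → ∫ x in Ω, ⟪b x, gradient ψ x⟫ = 0)
    {s : E → ℝ} (hs : Continuous s) (hs0 : ∀ x, 0 ≤ s x) (hsL : ∀ x, s x ≤ L)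
    (hsT : ∀ x ∉ T, s x = 0) (hsd : ∀ x, HasGradientAt (fun y => s y ^ 2) ((2 * s x) • P x) x)
    {η : E → ℝ} {N : E → E} (hη : ∀ x, HasGradientAt η (N x) x) (hN : Continuous N)
    (hη0 : ∀ x, 0 ≤ η x) (hη1 : ∀ x, η x ≤ 1) (hηc : HasCompactSupport η)
    (hNM : ∀ x, ‖N x‖ ≤ M) :
    Integrable (fun x => s x * ‖P x‖ ^ p * η x ^ p) ∧
    2 * c * ∫ x, s x * ‖P x‖ ^ p * η x ^ p ≤
      p * Γ * L * l * (∫ x, {x | N x ≠ 0}.indicator (fun x => s x * ‖P x‖ ^ p * η x ^ p) x) +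
      p * Γ * L * L * l ^ (1 - p) * ∫ x, ‖N x‖ ^ p := by
  have hp0 : 0 < p := by linarith
  have hp1 : 0 < p - 1 := by linarith
  have hηcont : Continuous η := continuous_iff_continuousAt.2 fun x => (hη x).continuousAt
  set S := T ∩ tsupport η with hS
  have hSc : IsCompact S := IsCompact.inter_left hηc hT
  have hSΩ : S ⊆ Ω := inter_subset_left.trans hTΩ
  have hSm : MeasurableSet S := hSc.isClosed.measurableSet
  have hPloc : ∀ S' ⊆ Ω, IsCompact S' → IntegrableOn (fun x => ‖P x‖ ^ p) S' :=
    fun S' h1 h2 => hPi.integrableOn_compact_subset h1 h2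
  have hPS := hPloc S hSΩ hSc
  have hoff : ∀ x ∉ S, s x = 0 ∨ η x = 0 := fun x hx => by
    by_cases hxT : x ∈ T
    · exact Or.inr (image_eq_zero_of_notMem_tsupport fun h => hx ⟨hxT, h⟩)
    · exact Or.inl (hsT x hxT)
  have hηp : ∀ x, η x ^ p ≤ 1 := fun x => Real.rpow_le_one (hη0 x) (hη1 x) hp0.le
  have hηp0 : ∀ x, 0 ≤ η x ^ p := fun x => Real.rpow_nonneg (hη0 x) _
  have hηq : ∀ x, η x ^ (p - 1) ≤ 1 := fun x => Real.rpow_le_one (hη0 x) (hη1 x) hp1.le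
  have hηq0 : ∀ x, 0 ≤ η x ^ (p - 1) := fun x => Real.rpow_nonneg (hη0 x) _
  have hN0 : ∀ x ∉ tsupport η, N x = 0 := fun x hx => by
    rw [← (hη x).gradient]
    exact gradient_eq_zero_of_notMem hx
  -- the weighted energy density is integrable
  have hwi : Integrable (fun x => s x * ‖P x‖ ^ p * η x ^ p) := by
    have h1 : Integrable (S.indicator fun x => L * ‖P x‖ ^ p) :=
      (integrable_indicator_iff hSm).2 (hPS.const_mul L)
    refine h1.mono (by fun_prop : Measurable fun x => s x * ‖P x‖ ^ p * η x ^ p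
      ).aestronglyMeasurable (Eventually.of_forall fun x => ?_)
    by_cases hx : x ∈ S
    · have h2 : 0 ≤ ‖P x‖ ^ p := by positivity
      have h3 := hs0 x
      rw [indicator_of_mem hx, Real.norm_of_nonneg (mul_nonneg (mul_nonneg h3 h2) (hηp0 x)),
        Real.norm_of_nonneg (by positivity)]
      calc s x * ‖P x‖ ^ p * η x ^ p ≤ s x * ‖P x‖ ^ p * 1 := by gcongr; exact hηp x
        _ ≤ L * ‖P x‖ ^ p := by rw [mul_one]; gcongr; exact hsL x
    · rcases hoff x hx with h | h <;> simp [h, hx, Real.zero_rpow hp0.ne']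
  refine ⟨hwi, ?_⟩
  -- the test function `s² ηᵖ` and its gradient
  set G : E → E := fun x => (η x ^ p * (2 * s x)) • P x + (s x ^ 2 * (p * η x ^ (p - 1))) • N x
    with hG
  have hφ : ∀ x, HasGradientAt (fun y => s y ^ 2 * η y ^ p) (G x) x := by
    intro x
    have h1 := hasGradientAt_iff_hasFDerivAt.1 (hsd x)
    have h2 := (hasGradientAt_iff_hasFDerivAt.1 (hη x)).rpow_const (p := p)
      (Or.inr (by linarith))
    rw [hasGradientAt_iff_hasFDerivAt]
    have h3 := h1.mul h2
    have e : InnerProductSpace.toDual ℝ E (G x) =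
        s x ^ 2 • ((p * η x ^ (p - 1)) • InnerProductSpace.toDual ℝ E (N x)) +
        η x ^ p • InnerProductSpace.toDual ℝ E ((2 * s x) • P x) := by
      ext v
      simp [hG]
      ring
    rw [e]
    exact h3
  have hsupp : tsupport (fun y => s y ^ 2 * η y ^ p) ⊆ S := by
    refine closure_minimal ?_ hSc.isClosed
    intro x hx
    by_contra h
    rcases hoff x h with h | h <;> simp [h, Real.zero_rpow hp0.ne'] at hx
  have hφc : HasCompactSupport (fun y => s y ^ 2 * η y ^ p) :=
    hSc.of_isClosed_subset (isClosed_tsupport _) hsupp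
  have hG0 : ∀ x ∉ S, G x = 0 := fun x hx => by
    rw [← (hφ x).gradient]
    exact gradient_eq_zero_of_notMem fun h => hx (hsupp h)
  have hGm : Measurable G := by
    have h1 : Measurable η := hηcont.measurable
    have h2 : Measurable s := hs.measurable
    have h3 : Measurable N := hN.measurable
    fun_prop
  have hGp : MemLp G (ENNReal.ofReal p) volume := by
    have h1 : MemLp (S.indicator P) (ENNReal.ofReal p) volume :=
      memLp_indicator_of_integrableOn (by linarith) hP hSm hPS
    have h2 : MemLp (S.indicator fun _ => L ^ 2 * p * M) (ENNReal.ofReal p) (volume : Measure E) :=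
      memLp_indicator_const _ hSm _ (Or.inr hSc.measure_lt_top.ne)
    refine ((h1.norm.const_mul (2 * L)).add h2).mono hGm.aestronglyMeasurable
      (Eventually.of_forall fun x => ?_)
    by_cases hx : x ∈ S
    · have hM : 0 ≤ M := (norm_nonneg _).trans (hNM x)
      simp only [Pi.add_apply, indicator_of_mem hx]
      rw [Real.norm_of_nonneg (by positivity)]
      refine (norm_add_le _ _).trans ?_
      have h3 := hs0 x
      have h4 := hηp0 x
      have h5 := hηq0 x
      rw [norm_smul, norm_smul, Real.norm_of_nonneg (by positivity),
        Real.norm_of_nonneg (by positivity)]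
      refine add_le_add ?_ ?_
      · refine mul_le_mul_of_nonneg_right ?_ (norm_nonneg _)
        calc η x ^ p * (2 * s x) ≤ 1 * (2 * L) := by gcongr; exacts [hηp x, hsL x]
          _ = 2 * L := one_mul _
      · calc s x ^ 2 * (p * η x ^ (p - 1)) * ‖N x‖ ≤ L ^ 2 * (p * 1) * M := by
              gcongr; exacts [hsL x, hηq x, hNM x]
          _ = L ^ 2 * p * M := by ring
    · rw [hG0 x hx]; simp
  have : (ENNReal.ofReal (p / (p - 1))).HolderConjugate (ENNReal.ofReal p) := holderConj hp
  have hBS := memLp_flux hp hb hbu hSm hPS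
  have h0 : ∫ x in Ω, ⟪b x, G x⟫ = 0 :=
    weak_extend (p := ENNReal.ofReal p) (q := ENNReal.ofReal (p / (p - 1))) hΩ
      (by simp; linarith) (by rw [ENNReal.one_le_ofReal, le_div_iff₀ hp1]; linarith)
      ENNReal.ofReal_ne_top
      (fun S' h1 h2 => memLp_flux hp hb hbu h2.isClosed.measurableSet (hPloc S' h1 h2))
      hweak hφ hφc (hsupp.trans hSΩ) hGp
  rw [setIntegral_inner_eq hΩ.measurableSet hSΩ hG0] at h0
  have hFi : Integrable fun x => ⟪S.indicator b x, G x⟫ := by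
    refine (hBS.norm.integrable_mul hGp.norm).mono (hBS.1.inner hGp.1)
      (Eventually.of_forall fun x => ?_)
    simpa using abs_real_inner_le_norm (S.indicator b x) (G x)
  have hNi : Integrable fun x => ‖N x‖ ^ p := by
    refine Continuous.integrable_of_hasCompactSupport
      (hN.norm.rpow_const fun _ => Or.inr hp0.le) ?_
    refine HasCompactSupport.intro hηc fun x hx => ?_
    simp [hN0 x hx, Real.zero_rpow hp0.ne']
  have hNm : MeasurableSet {x | N x ≠ 0} := (isOpen_ne_fun hN continuous_const).measurableSet
  have hτi : Integrable ({x | N x ≠ 0}.indicator fun x => s x * ‖P x‖ ^ p * η x ^ p) :=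
    hwi.indicator hNm
  -- the pointwise inequality whose integral is the claim
  have hpt : ∀ x, 2 * c * (s x * ‖P x‖ ^ p * η x ^ p) ≤ ⟪S.indicator b x, G x⟫ +
      (p * Γ * L * l * ({x | N x ≠ 0}.indicator (fun x => s x * ‖P x‖ ^ p * η x ^ p) x) +
      p * Γ * L * L * l ^ (1 - p) * ‖N x‖ ^ p) := by
    intro x
    have hind : 0 ≤ {x | N x ≠ 0}.indicator (fun x => s x * ‖P x‖ ^ p * η x ^ p) x :=
      indicator_nonneg (fun x _ => mul_nonneg (mul_nonneg (hs0 x) (by positivity)) (hηp0 x)) x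
    have hlp : 0 ≤ l ^ (1 - p) := Real.rpow_nonneg hl.le _
    have hNp : 0 ≤ ‖N x‖ ^ p := by positivity
    by_cases hx : x ∈ S
    swap
    · have h1 : s x * ‖P x‖ ^ p * η x ^ p = 0 := by
        rcases hoff x hx with h | h <;> simp [h, Real.zero_rpow hp0.ne']
      rw [h1, indicator_of_notMem hx, inner_zero_left, mul_zero, zero_add]
      positivity
    have h3 := hs0 x
    have h4 := hηp0 x
    have h5 := hηq0 x
    rw [indicator_of_mem hx]
    have hA : c * ‖P x‖ ^ p * (2 * (s x * η x ^ p)) ≤ ⟪b x, P x⟫ * (2 * (s x * η x ^ p)) := by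
      gcongr; exact hbl x
    have hinner : ⟪b x, G x⟫ = ⟪b x, P x⟫ * (2 * (s x * η x ^ p)) +
        p * s x * s x * η x ^ (p - 1) * ⟪b x, N x⟫ := by
      simp only [hG, inner_add_right, real_inner_smul_right]; ring
    -- the cross term, by Young's inequality
    have hB : -(p * s x * s x * η x ^ (p - 1) * ⟪b x, N x⟫) ≤
        p * Γ * L * l * ({x | N x ≠ 0}.indicator (fun x => s x * ‖P x‖ ^ p * η x ^ p) x) +
        p * Γ * L * L * l ^ (1 - p) * ‖N x‖ ^ p := by
      by_cases hNx : N x = 0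
      · rw [hNx, inner_zero_right]
        simp only [mul_zero, neg_zero]
        positivity
      rw [indicator_of_mem (show x ∈ {x | N x ≠ 0} from hNx)]
      have hin : -⟪b x, N x⟫ ≤ Γ * ‖P x‖ ^ (p - 1) * ‖N x‖ := by
        refine (neg_le_abs _).trans ((abs_real_inner_le_norm _ _).trans ?_)
        gcongr; exact hbu x
      have hy := young_weighted (l := l) (by linarith : 1 < p)
        (mul_nonneg (hη0 x) (norm_nonneg (P x))) (norm_nonneg (N x)) hl
      rw [Real.mul_rpow (hη0 x) (norm_nonneg _), Real.mul_rpow (hη0 x) (norm_nonneg _)] at hy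
      calc -(p * s x * s x * η x ^ (p - 1) * ⟪b x, N x⟫)
          = p * s x * s x * η x ^ (p - 1) * -⟪b x, N x⟫ := by ring
        _ ≤ p * s x * s x * η x ^ (p - 1) * (Γ * ‖P x‖ ^ (p - 1) * ‖N x‖) := by gcongr
        _ = p * Γ * s x * s x * (η x ^ (p - 1) * ‖P x‖ ^ (p - 1) * ‖N x‖) := by ring
        _ ≤ p * Γ * L * s x * (l * (η x ^ p * ‖P x‖ ^ p) + l ^ (1 - p) * ‖N x‖ ^ p) := by
            gcongr; exact hsL x
        _ = p * Γ * L * l * (s x * ‖P x‖ ^ p * η x ^ p) +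
            p * Γ * L * s x * l ^ (1 - p) * ‖N x‖ ^ p := by ring
        _ ≤ _ := by gcongr; exact hsL x
    rw [hinner]
    linarith
  have hR1 := hτi.const_mul (p * Γ * L * l)
  have hR2 := hNi.const_mul (p * Γ * L * L * l ^ (1 - p))
  have hR : Integrable fun x =>
      p * Γ * L * l * ({x | N x ≠ 0}.indicator (fun x => s x * ‖P x‖ ^ p * η x ^ p) x) +
      p * Γ * L * L * l ^ (1 - p) * ‖N x‖ ^ p := hR1.add hR2
  have hFR : Integrable fun x => ⟪S.indicator b x, G x⟫ +
      (p * Γ * L * l * ({x | N x ≠ 0}.indicator (fun x => s x * ‖P x‖ ^ p * η x ^ p) x) +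
      p * Γ * L * L * l ^ (1 - p) * ‖N x‖ ^ p) := hFi.add hR
  have := integral_mono (hwi.const_mul (2 * c)) hFR hpt
  rw [integral_add hFi hR, h0, zero_add, integral_add hR1 hR2, integral_const_mul,
    integral_const_mul, integral_const_mul] at this
  exact this

/-- Hole filling. A bounded nondecreasing sequence has increments tending to `0`, so its limit `σ`
satisfies `c σ ≤ D l^(1-p)` for every `l > 0`; let `l → ∞`. -/
theorem holeFilling {a : ℕ → ℝ} {B c C D p : ℝ} (hp : 1 < p) (hc : 0 < c) (hm : Monotone a)
    (hB : ∀ k, a k ≤ B)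
    (h : ∀ l > 0, ∀ k, c * a k ≤ C * l * (a (k + 1) - a k) + D * l ^ (1 - p)) (k : ℕ) :
    a k ≤ 0 := by
  have hbdd : BddAbove (range a) := ⟨B, by rintro _ ⟨k, rfl⟩; exact hB k⟩
  have ht := tendsto_atTop_ciSup hm hbdd
  set s := ⨆ k, a k
  have h1 : ∀ l > 0, c * s ≤ D * l ^ (1 - p) := by
    intro l hl
    have h2 : Tendsto (fun k => C * l * (a (k + 1) - a k) + D * l ^ (1 - p)) atTop
        (𝓝 (C * l * (s - s) + D * l ^ (1 - p))) :=
      ((((tendsto_add_atTop_iff_nat 1).2 ht).sub ht).const_mul _).add_const _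
    have := le_of_tendsto_of_tendsto' (ht.const_mul c) h2 (h l hl)
    simpa using this
  have h3 : Tendsto (fun l : ℝ => D * l ^ (1 - p)) atTop (𝓝 (D * 0)) := by
    refine Tendsto.const_mul _ ?_
    simpa using tendsto_rpow_neg_atTop (by linarith : 0 < p - 1)
  have h4 : c * s ≤ D * 0 := ge_of_tendsto h3 (by
    filter_upwards [eventually_gt_atTop 0] with l hl using h1 l hl)
  have h5 : s ≤ 0 := by nlinarith
  exact (le_ciSup hbdd k).trans h5

/-- Cutoffs `η` equal to `1` on the ball of radius `2^k` and `0` off the ball of radius `2^(k+1)`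
whose energies `∫ |∇η|^p` are bounded uniformly in `k`. By scaling, the energy is at most a constant
times `2^(k (d - p))` with `d` the dimension, and `d ≤ p`. -/
theorem exists_cutoff {p : ℝ} (hp : 2 ≤ p) (hd : (Module.finrank ℝ E : ℝ) ≤ p) :
    ∃ D : ℝ, ∀ k : ℕ, ∃ (η : E → ℝ) (N : E → E) (M : ℝ), (∀ x, HasGradientAt η (N x) x) ∧
      Continuous N ∧ (∀ x, 0 ≤ η x) ∧ (∀ x, η x ≤ 1) ∧ HasCompactSupport η ∧
      (∀ x, ‖N x‖ ≤ M) ∧ (∀ x ∈ Metric.ball (0 : E) (2 ^ k), η x = 1) ∧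
      (∀ x ∈ Metric.ball (0 : E) (2 ^ k), N x = 0) ∧
      (∀ x ∉ Metric.ball (0 : E) (2 ^ (k + 1)), η x = 0) ∧ ∫ x, ‖N x‖ ^ p ≤ D := by
  have hp0 : 0 < p := by linarith
  let χ : ContDiffBump (0 : E) := ⟨1, 2, one_pos, one_lt_two⟩
  have hχs : ContDiff ℝ 1 χ := χ.contDiff
  have hgc : Continuous (gradient χ) := by
    have : Continuous (fderiv ℝ χ) := hχs.continuous_fderiv (by norm_num)
    exact (InnerProductSpace.toDual ℝ E).symm.continuous.comp this
  have hgcs : HasCompactSupport (gradient χ) :=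
    HasCompactSupport.intro χ.hasCompactSupport fun x hx => gradient_eq_zero_of_notMem hx
  obtain ⟨M, hM⟩ := hgc.bounded_above_of_compact_support hgcs
  have hM0 : 0 ≤ M := (norm_nonneg _).trans (hM 0)
  set V := (volume : Measure E).real (Metric.ball 0 1)
  refine ⟨M ^ p * 2 ^ (Module.finrank ℝ E) * V, fun k => ?_⟩
  have hk : (0 : ℝ) < 2 ^ k := by positivity
  set r : ℝ := (2 ^ k)⁻¹ with hr
  have hr0 : 0 < r := by positivity
  have hg : ∀ x, HasGradientAt (fun y => χ (r • y)) (r • gradient χ (r • x)) x := by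
    intro x
    have h1 := hasGradientAt_iff_hasFDerivAt.1
      (hχs.differentiable (by norm_num) (r • x)).hasGradientAt
    have h2 : HasFDerivAt (fun y : E => r • y) (r • ContinuousLinearMap.id ℝ E) x :=
      (hasFDerivAt_id x).const_smul r
    rw [hasGradientAt_iff_hasFDerivAt]
    have h3 := h1.comp x h2
    have e : InnerProductSpace.toDual ℝ E (r • gradient χ (r • x)) =
        (InnerProductSpace.toDual ℝ E (gradient χ (r • x))).comp
          (r • ContinuousLinearMap.id ℝ E) := by
      ext v
      simp
    rw [e]
    exact h3
  have hnorm : ∀ x : E, ‖r • x‖ = ‖x‖ / 2 ^ k := fun x => by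
    rw [norm_smul, Real.norm_of_nonneg hr0.le, hr, div_eq_inv_mul]
  have hN0 : ∀ x ∉ Metric.closedBall (0 : E) (2 ^ (k + 1)), r • gradient χ (r • x) = 0 := by
    intro x hx
    rw [gradient_eq_zero_of_notMem, smul_zero]
    rw [χ.tsupport_eq]
    simp only [Metric.mem_closedBall, dist_zero_right, not_le, hnorm] at hx ⊢
    rw [lt_div_iff₀ hk]
    simpa [χ, pow_succ, mul_comm] using hx
  have hη0 : ∀ x ∉ Metric.ball (0 : E) (2 ^ (k + 1)), χ (r • x) = 0 := by
    intro x hx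
    apply χ.zero_of_le_dist
    simp only [Metric.mem_ball, dist_zero_right, not_lt, hnorm] at hx ⊢
    rw [le_div_iff₀ hk]
    simpa [χ, pow_succ, mul_comm] using hx
  have hin : ∀ x ∈ Metric.ball (0 : E) (2 ^ k), r • x ∈ Metric.ball (0 : E) χ.rIn := by
    intro x hx
    simp only [Metric.mem_ball, dist_zero_right, hnorm] at hx ⊢
    rw [div_lt_iff₀ hk]
    simpa [χ] using hx
  refine ⟨fun x => χ (r • x), fun x => r • gradient χ (r • x), r * M, hg, by fun_prop,
    fun x => χ.nonneg, fun x => χ.le_one, ?_, ?_, ?_, ?_, hη0, ?_⟩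
  · refine HasCompactSupport.intro (isCompact_closedBall (0 : E) (2 ^ (k + 1))) fun x hx => ?_
    exact hη0 x fun h => hx (Metric.ball_subset_closedBall h)
  · intro x
    rw [norm_smul, Real.norm_of_nonneg hr0.le]
    gcongr
    exact hM _
  · intro x hx
    exact χ.one_of_mem_closedBall (Metric.ball_subset_closedBall (hin x hx))
  · intro x hx
    have h1 : χ =ᶠ[𝓝 (r • x)] fun _ => 1 := χ.eventuallyEq_one_of_mem_ball (hin x hx)
    have h2 : fderiv ℝ χ (r • x) = 0 := by rw [h1.fderiv_eq]; simp
    simp [gradient, h2]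
  · have hle : ∀ x, ‖r • gradient χ (r • x)‖ ^ p ≤
        (Metric.closedBall (0 : E) (2 ^ (k + 1))).indicator (fun _ => (r * M) ^ p) x := by
      intro x
      by_cases hx : x ∈ Metric.closedBall (0 : E) (2 ^ (k + 1))
      · rw [indicator_of_mem hx]
        refine Real.rpow_le_rpow (norm_nonneg _) ?_ hp0.le
        rw [norm_smul, Real.norm_of_nonneg hr0.le]
        gcongr
        exact hM _
      · rw [indicator_of_notMem hx, hN0 x hx, norm_zero, Real.zero_rpow hp0.ne']
    have hmono := integral_mono_of_nonneg (μ := (volume : Measure E))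
      (Eventually.of_forall fun x => Real.rpow_nonneg (norm_nonneg _) _)
      ((integrable_indicator_iff Metric.isClosed_closedBall.measurableSet).2
        (integrableOn_const (isCompact_closedBall (0 : E) (2 ^ (k + 1))).measure_lt_top.ne))
      (Eventually.of_forall hle)
    refine hmono.trans ?_
    rw [integral_indicator_const _ Metric.isClosed_closedBall.measurableSet,
      Measure.addHaar_real_closedBall _ _ (by positivity), smul_eq_mul, Real.mul_rpow hr0.le hM0]
    have h1 : r ^ p * (2 ^ k) ^ (Module.finrank ℝ E) ≤ 1 := by
      rw [hr, Real.inv_rpow hk.le, inv_mul_le_one₀ (by positivity), ← Real.rpow_natCast (2 ^ k)]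
      exact Real.rpow_le_rpow_of_exponent_le (one_le_pow₀ one_le_two) hd
    have hV : 0 ≤ V := measureReal_nonneg
    calc (2 ^ (k + 1)) ^ (Module.finrank ℝ E) * V * (r ^ p * M ^ p)
        = (r ^ p * (2 ^ k) ^ (Module.finrank ℝ E)) * (M ^ p * 2 ^ (Module.finrank ℝ E) * V) := by
          rw [pow_succ, mul_pow]; ring
      _ ≤ 1 * (M ^ p * 2 ^ (Module.finrank ℝ E) * V) := by gcongr
      _ = _ := one_mul _

end Caccioppoli

/-! ### The maximum principle -/

section Vanishing

open Topology Filter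

variable {E : Type*} [NormedAddCommGroup E] [InnerProductSpace ℝ E] [FiniteDimensional ℝ E]
  [MeasurableSpace E] [BorelSpace E]

/-- The truncation `s` of the solution vanishes identically as soon as it vanishes at one point.
Its energy `∫ s |P|^p` is zero by the Caccioppoli estimate with the cutoffs of `exists_cutoff` and
hole filling; so `∇(s²) = 2 s P = 0` almost everywhere and `s²` is constant. -/
theorem truncation_eq_zero {p c Γ L : ℝ} (hp : 2 ≤ p) (hd : (Module.finrank ℝ E : ℝ) ≤ p)
    (hc : 0 < c) (hΓ : 0 < Γ) (hL : 0 < L)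
    {Ω T : Set E} (hΩ : IsOpen Ω) (hT : IsClosed T) (hTΩ : T ⊆ Ω)
    {P b : E → E} (hP : Measurable P) (hb : Measurable b)
    (hPi : LocallyIntegrableOn (fun x => ‖P x‖ ^ p) Ω)
    (hbu : ∀ x, ‖b x‖ ≤ Γ * ‖P x‖ ^ (p - 1)) (hbl : ∀ x, c * ‖P x‖ ^ p ≤ ⟪b x, P x⟫)
    (hweak : ∀ ψ : E → ℝ, (∃ c : ℝ≥0, LipschitzWith c ψ) →
      HasCompactSupport ψ → tsupport ψ ⊆ Ω → ∫ x in Ω, ⟪b x, gradient ψ x⟫ = 0)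
    {s : E → ℝ} (hs : Continuous s) (hs0 : ∀ x, 0 ≤ s x) (hsL : ∀ x, s x ≤ L)
    (hsT : ∀ x ∉ T, s x = 0) (hsd : ∀ x, HasGradientAt (fun y => s y ^ 2) ((2 * s x) • P x) x)
    {x₀ : E} (hx₀ : s x₀ = 0) (x : E) : s x = 0 := by
  have hp0 : 0 < p := by linarith
  obtain ⟨D, hD⟩ := exists_cutoff (E := E) hp hd
  choose η N M hη hN hη0 hη1 hηc hNM hηb hNb hηo hND using hD
  set w : E → ℝ := fun x => s x * ‖P x‖ ^ p with hw
  have hw0 : ∀ x, 0 ≤ w x := fun x => mul_nonneg (hs0 x) (by positivity)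
  have hwη0 : ∀ k x, 0 ≤ w x * η k x ^ p := fun k x =>
    mul_nonneg (hw0 x) (Real.rpow_nonneg (hη0 k x) _)
  have hwη : ∀ k x, w x * η k x ^ p ≤ w x := fun k x =>
    mul_le_of_le_one_right (hw0 x) (Real.rpow_le_one (hη0 k x) (hη1 k x) hp0.le)
  have hC := fun k l (hl : 0 < l) => caccioppoli (c := c) hp hΓ.le hL.le hl hΩ hT hTΩ hP hb hPi
    hbu hbl hweak hs hs0 hsL hsT hsd (hη k) (hN k) (hη0 k) (hη1 k) (hηc k) (hNM k)
  have hwi : ∀ k, Integrable fun x => w x * η k x ^ p := fun k => (hC k 1 one_pos).1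
  set A : ℝ := p * Γ * L with hA
  have hA0 : 0 < A := by positivity
  set I : ℕ → ℝ := fun k => ∫ x, w x * η k x ^ p with hI
  set J : ℕ → ℝ := fun k =>
    ∫ x, {x | N k x ≠ 0}.indicator (fun x => w x * η k x ^ p) x with hJ
  have hD0 : 0 ≤ D := (integral_nonneg fun x => by positivity).trans (hND 0)
  have hIJ : ∀ k, ∀ l > 0, 2 * c * I k ≤ A * l * J k + A * L * D * l ^ (1 - p) := by
    intro k l hl
    have h1 := (hC k l hl).2
    have h2 : A * L * l ^ (1 - p) * ∫ x, ‖N k x‖ ^ p ≤ A * L * l ^ (1 - p) * D :=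
      mul_le_mul_of_nonneg_left (hND k) (by positivity)
    calc 2 * c * I k ≤ A * l * J k + A * L * l ^ (1 - p) * ∫ x, ‖N k x‖ ^ p := h1
      _ ≤ A * l * J k + A * L * D * l ^ (1 - p) := by linarith
  have hNm : ∀ k, MeasurableSet {x | N k x ≠ 0} := fun k =>
    (isOpen_ne_fun (hN k) continuous_const).measurableSet
  set U : ℕ → Set E := fun k => Metric.ball 0 (2 ^ k) with hU
  have hUm : ∀ k, MeasurableSet (U k) := fun k => Metric.isOpen_ball.measurableSet
  have hUmono : Monotone U := fun i j hij =>
    Metric.ball_subset_ball (pow_le_pow_right₀ one_le_two hij)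
  have hηw : ∀ k, EqOn (fun x => w x * η k x ^ p) w (U k) := fun k x hx => by
    simp [hηb k x hx]
  have hwU : ∀ k, IntegrableOn w (U k) := fun k =>
    (hwi k).integrableOn.congr_fun (hηw k) (hUm k)
  set a : ℕ → ℝ := fun k => ∫ x in U k, w x with ha
  have haI : ∀ k, a k ≤ I k := fun k => by
    rw [ha, hI]
    dsimp only
    rw [← setIntegral_congr_fun (hUm k) (hηw k)]
    exact setIntegral_le_integral (hwi k) (Eventually.of_forall (hwη0 k))
  have hJI : ∀ k, J k ≤ I k := fun k =>
    integral_mono ((hwi k).indicator (hNm k)) (hwi k)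
      (indicator_le_self' fun x _ => hwη0 k x)
  -- the gradient of the cutoff lives in the annulus between consecutive dyadic balls
  have hJa : ∀ k, J k ≤ a (k + 1) - a k := fun k => by
    rw [ha]
    dsimp only
    rw [← setIntegral_sdiff (hUm k) (hwU (k + 1)) (hUmono k.le_succ),
      ← integral_indicator ((hUm (k + 1)).diff (hUm k))]
    refine integral_mono ((hwi k).indicator (hNm k))
      ((integrable_indicator_iff ((hUm (k + 1)).diff (hUm k))).2
        ((hwU (k + 1)).mono_set sdiff_subset)) fun x => ?_
    by_cases h1 : x ∈ U k
    · have h2 : x ∉ {x | N k x ≠ 0} := fun h => h (hNb k x h1)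
      rw [indicator_of_notMem h2]
      exact indicator_nonneg (fun x _ => hw0 x) x
    by_cases h3 : x ∈ U (k + 1)
    · rw [indicator_of_mem (show x ∈ U (k + 1) \ U k from ⟨h3, h1⟩)]
      exact (indicator_le_self' (fun x _ => hwη0 k x) x).trans (hwη k x)
    · have h4 : w x * η k x ^ p = 0 := by simp [hηo k x h3, Real.zero_rpow hp0.ne']
      refine (indicator_le_self' (fun x _ => hwη0 k x) x).trans ?_
      rw [h4]
      exact indicator_nonneg (fun x _ => hw0 x) x
  -- absorbing the gradient term with `l = c / A` bounds the energy uniformly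
  have haB : ∀ k, a k ≤ A * L * D * (c / A) ^ (1 - p) / c := fun k => by
    rw [le_div_iff₀ hc]
    have h1 := hIJ k (c / A) (by positivity)
    rw [mul_div_cancel₀ _ hA0.ne'] at h1
    have h2 := mul_le_mul_of_nonneg_left (hJI k) hc.le
    have h3 := mul_le_mul_of_nonneg_left (haI k) hc.le
    linarith
  have ham : Monotone a := fun i j hij =>
    setIntegral_mono_set (hwU j) (Eventually.of_forall hw0) (hUmono hij).eventuallyLE
  have ha0 : ∀ k, a k ≤ 0 := holeFilling (p := p) (c := 2 * c) (C := A) (D := A * L * D)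
    (by linarith) (by positivity) ham haB fun l hl k => by
      have h1 := hIJ k l hl
      have h2 := mul_le_mul_of_nonneg_left (hJa k) (by positivity : 0 ≤ A * l)
      have h3 := mul_le_mul_of_nonneg_left (haI k) (by positivity : 0 ≤ 2 * c)
      linarith
  have hwz : ∀ᵐ x, w x = 0 := by
    have h1 : ∀ k, ∀ᵐ x, x ∈ U k → w x = 0 := fun k => by
      have h2 : ∫ x in U k, w x = 0 := le_antisymm (ha0 k)
        (setIntegral_nonneg (hUm k) fun x _ => hw0 x)
      rw [setIntegral_eq_zero_iff_of_nonneg_ae (Eventually.of_forall hw0) (hwU k)] at h2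
      exact (ae_restrict_iff' (hUm k)).1 h2
    filter_upwards [ae_all_iff.2 h1] with x hx
    obtain ⟨k, hk⟩ := pow_unbounded_of_one_lt ‖x‖ (one_lt_two (α := ℝ))
    exact hx k (by simpa [hU] using hk)
  have hconst := const_of_gradient_ae_zero hsd (by
    filter_upwards [hwz] with x hx
    rcases mul_eq_zero.1 hx with h | h
    · simp [h]
    · have : ‖P x‖ = 0 := (Real.rpow_eq_zero (norm_nonneg _) hp0.ne').1 h
      simp [norm_eq_zero.1 this]) x x₀
  simpa [hx₀] using hconst

/-- The maximum principle from above, for a general flux `b` with the growth and coercivity of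
`𝒜(x, ∇u)`. This form applies to both `u` and `-u`. The strict inequality on `∂K` keeps the closed
set `{u ≥ m}` inside `Kᶜ`, so the positive part of `u - m` vanishes near `K`. -/
theorem upper_bound {p c Γ m : ℝ} (hp : 2 ≤ p) (hd : (Module.finrank ℝ E : ℝ) ≤ p)
    (hc : 0 < c) (hΓ : 0 < Γ) {K : Set E} (hK : IsClosed K) (hKne : K.Nonempty)
    {u : E → ℝ} {b : E → E} (hb : Measurable b)
    (hbu : ∀ x, ‖b x‖ ≤ Γ * ‖gradient u x‖ ^ (p - 1))
    (hbl : ∀ x, c * ‖gradient u x‖ ^ p ≤ ⟪b x, gradient u x⟫)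
    (hu_bdd : ∃ M, ∀ x ∈ Kᶜ, |u x| ≤ M) (hu_cont : ContinuousOn u (closure Kᶜ))
    (hu_diff : DifferentiableOn ℝ u Kᶜ)
    (hu_loc : LocallyIntegrableOn (fun x => ‖gradient u x‖ ^ p) Kᶜ)
    (hweak : ∀ ψ : E → ℝ, (∃ c : ℝ≥0, LipschitzWith c ψ) →
      HasCompactSupport ψ → tsupport ψ ⊆ Kᶜ → ∫ x in Kᶜ, ⟪b x, gradient ψ x⟫ = 0)
    (hm : ∀ x ∈ frontier K, u x < m) : ∀ x ∈ Kᶜ, u x ≤ m := by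
  classical
  obtain ⟨M, hM⟩ := hu_bdd
  have hΩ : IsOpen Kᶜ := hK.isOpen_compl
  set s : E → ℝ := fun x => if x ∈ Kᶜ then max (u x - m) 0 else 0 with hs
  set T : Set E := closure Kᶜ ∩ u ⁻¹' Ici m with hT
  have hTc : IsClosed T := hu_cont.preimage_isClosed_of_isClosed isClosed_closure isClosed_Ici
  -- a point of `T` in `K` would lie on `∂K`, where `u < m`
  have hTΩ : T ⊆ Kᶜ := by
    intro x hx hxK
    have h1 : x ∈ frontier K := by
      rw [← frontier_compl, frontier, hΩ.interior_eq]
      exact ⟨hx.1, fun h => h hxK⟩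
    exact (hm x h1).not_ge hx.2
  have hsT : ∀ x ∉ T, s x = 0 := by
    intro x hx
    by_cases h : x ∈ Kᶜ
    · have h1 : u x < m := by
        by_contra h1
        exact hx ⟨subset_closure h, not_lt.1 h1⟩
      simp only [hs, if_pos h]
      exact max_eq_right (by linarith)
    · simp only [hs, if_neg h]
  have hoff : ∀ x ∉ T, s =ᶠ[𝓝 x] fun _ => 0 := fun x hx => by
    filter_upwards [hTc.isOpen_compl.mem_nhds hx] with y hy using hsT y hy
  have hon : ∀ x ∈ Kᶜ, s =ᶠ[𝓝 x] fun y => max (u y - m) 0 := fun x hx => by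
    filter_upwards [hΩ.mem_nhds hx] with y hy
    simp only [hs, if_pos hy]
  have hud : ∀ x ∈ Kᶜ, HasFDerivAt u (fderiv ℝ u x) x := fun x hx =>
    (hu_diff.differentiableAt (hΩ.mem_nhds hx)).hasFDerivAt
  have hsc : Continuous s := continuous_iff_continuousAt.2 fun x => by
    by_cases hx : x ∈ T
    · refine ContinuousAt.congr ?_ (hon x (hTΩ hx)).symm
      have := (hud x (hTΩ hx)).continuousAt
      fun_prop
    · exact continuousAt_const.congr (hoff x hx).symm
  have hs0 : ∀ x, 0 ≤ s x := fun x => by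
    simp only [hs]
    split_ifs
    exacts [le_max_right _ _, le_rfl]
  have hsL : ∀ x, s x ≤ |M| + |m| + 1 := fun x => by
    have h1 := abs_nonneg M
    have h2 := abs_nonneg m
    by_cases hx : x ∈ Kᶜ
    · simp only [hs, if_pos hx]
      refine max_le ?_ (by linarith)
      linarith [le_abs_self (u x), hM x hx, le_abs_self M, neg_abs_le m]
    · simp only [hs, if_neg hx]
      linarith
  -- the square of the positive part is differentiable everywhere
  have hsq : ∀ r : ℝ, HasDerivAt (fun r : ℝ => max r 0 ^ 2) (2 * max r 0) r := by
    intro r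
    rcases lt_trichotomy r 0 with h | h | h
    · have e : (fun r : ℝ => max r 0 ^ 2) =ᶠ[𝓝 r] fun _ => 0 := by
        filter_upwards [Iio_mem_nhds h] with y hy
        simp [max_eq_right (le_of_lt (mem_Iio.1 hy))]
      rw [max_eq_right h.le, mul_zero]
      exact (hasDerivAt_const r (0 : ℝ)).congr_of_eventuallyEq e
    · subst h
      rw [max_self, mul_zero, hasDerivAt_iff_isLittleO]
      have h1 : (fun y : ℝ => y ^ 2) =o[𝓝 0] fun y : ℝ => y := by
        simpa using Asymptotics.isLittleO_pow_pow (𝕜 := ℝ) (m := 1) (n := 2) one_lt_two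
      refine Asymptotics.IsBigO.trans_isLittleO ?_ (by simpa using h1)
      refine Asymptotics.IsBigO.of_bound 1 (Eventually.of_forall fun y => ?_)
      rcases le_total y 0 with h | h
      · simp [max_eq_right h]; positivity
      · simp [max_eq_left h]
    · have e : (fun r : ℝ => max r 0 ^ 2) =ᶠ[𝓝 r] fun r => r ^ 2 := by
        filter_upwards [Ioi_mem_nhds h] with y hy
        simp [max_eq_left (le_of_lt (mem_Ioi.1 hy))]
      rw [max_eq_left h.le]
      simpa using (hasDerivAt_pow 2 r).congr_of_eventuallyEq e
  have hsd : ∀ x, HasGradientAt (fun y => s y ^ 2) ((2 * s x) • gradient u x) x := by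
    intro x
    rw [hasGradientAt_iff_hasFDerivAt]
    by_cases hx : x ∈ T
    · have h1 := (hsq (u x - m)).comp_hasFDerivAt x ((hud x (hTΩ hx)).sub_const m)
      have e : InnerProductSpace.toDual ℝ E ((2 * s x) • gradient u x) =
          (2 * max (u x - m) 0) • fderiv ℝ u x := by
        rw [map_smul, gradient, LinearIsometryEquiv.apply_symm_apply]
        simp only [hs, if_pos (hTΩ hx)]
      rw [e]
      refine h1.congr_of_eventuallyEq ?_
      filter_upwards [hon x (hTΩ hx)] with y hy
      rw [hy]
      rfl
    · rw [hsT x hx, mul_zero, zero_smul, map_zero]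
      refine (hasFDerivAt_const (0 : ℝ) x).congr_of_eventuallyEq ?_
      filter_upwards [hoff x hx] with y hy
      simp [hy]
  have hP : Measurable (gradient u) :=
    (InnerProductSpace.toDual ℝ E).symm.continuous.measurable.comp (measurable_fderiv ℝ u)
  obtain ⟨x₀, hx₀⟩ := hKne
  have hz := truncation_eq_zero hp hd hc hΓ (by positivity : 0 < |M| + |m| + 1) hΩ hTc hTΩ hP hb
    hu_loc hbu hbl hweak hsc hs0 hsL hsT hsd (x₀ := x₀) (by simp [hs, hx₀])
  intro x hx
  have h1 := hz x
  simp only [hs, if_pos hx] at h1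
  linarith [le_max_left (u x - m) 0]

end Vanishing

/-- a bounded weak solution of `div 𝒜(x, ∇u) = 0` in `ℝⁿ \ K`
with boundary data `f` on `∂K` satisfies `min f ≤ u ≤ max f` in `ℝⁿ \ K`. -/
theorem stmt_17 (n : ℕ) (hn : 2 ≤ n) (p : ℝ) (hp : (n : ℝ) ≤ p)
    (γ Γ : ℝ) (hγ : 0 < γ) (hγΓ : γ ≤ Γ)
    (K : Set (EuclideanSpace ℝ (Fin n))) (hK : IsCompact K) (hKne : K.Nonempty)
    (f : EuclideanSpace ℝ (Fin n) → ℝ) (hf : ContinuousOn f (frontier K))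
    (𝒜 : EuclideanSpace ℝ (Fin n) → EuclideanSpace ℝ (Fin n) → EuclideanSpace ℝ (Fin n))
    (h_cont : Continuous fun q : EuclideanSpace ℝ (Fin n) × EuclideanSpace ℝ (Fin n) =>
      𝒜 q.1 q.2)
    (h_diff : ∀ x, ContDiffOn ℝ 1 (𝒜 x) ({0}ᶜ : Set (EuclideanSpace ℝ (Fin n))))
    (h_zero : ∀ x, 𝒜 x 0 = 0)
    (h_upper : ∀ x, ∀ η : EuclideanSpace ℝ (Fin n), η ≠ 0 →
      ∑ i, ∑ j, |fderiv ℝ (𝒜 x) η (EuclideanSpace.single i 1) j| ≤ Γ * ‖η‖ ^ (p - 2))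
    (h_lower : ∀ x, ∀ η : EuclideanSpace ℝ (Fin n), η ≠ 0 →
      ∀ ξ : EuclideanSpace ℝ (Fin n),
      γ * ‖ξ‖ ^ (2 : ℕ) * ‖η‖ ^ (p - 2) ≤
        ∑ i, ∑ j, fderiv ℝ (𝒜 x) η (EuclideanSpace.single i 1) j * ξ i * ξ j)
    (u : EuclideanSpace ℝ (Fin n) → ℝ)
    (hu_bdd : ∃ M, ∀ x ∈ Kᶜ, |u x| ≤ M)
    (hu_cont : ContinuousOn u (closure Kᶜ))
    (hu_diff : DifferentiableOn ℝ u Kᶜ)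
    (hu_loc : LocallyIntegrableOn (fun x => ‖gradient u x‖ ^ p) Kᶜ)
    (hu_weak : ∀ ψ : EuclideanSpace ℝ (Fin n) → ℝ, (∃ c : ℝ≥0, LipschitzWith c ψ) →
      HasCompactSupport ψ → tsupport ψ ⊆ Kᶜ →
      ∫ x in Kᶜ, ⟪𝒜 x (gradient u x), gradient ψ x⟫ = 0)
    (h_bd : ∀ x ∈ frontier K, u x = f x) :
    ∀ x ∈ Kᶜ, sInf (f '' frontier K) ≤ u x ∧ u x ≤ sSup (f '' frontier K) := by
  have hp2 : 2 ≤ p := le_trans (by exact_mod_cast hn) hp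
  have hΓ : 0 < Γ := hγ.trans_le hγΓ
  have hc : 0 < γ / (p - 1) := div_pos hγ (by linarith)
  have hd : (Module.finrank ℝ (EuclideanSpace ℝ (Fin n)) : ℝ) ≤ p := by simpa using hp
  have hac : ∀ x, Continuous (𝒜 x) := fun x =>
    h_cont.comp (continuous_const.prodMk continuous_id)
  have hP : Measurable (gradient u) :=
    (InnerProductSpace.toDual ℝ (EuclideanSpace ℝ (Fin n))).symm.continuous.measurable.comp
      (measurable_fderiv ℝ u)
  have hb : Measurable fun x => 𝒜 x (gradient u x) :=
    h_cont.measurable.comp (measurable_id.prodMk hP)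
  have hbu : ∀ x, ‖𝒜 x (gradient u x)‖ ≤ Γ * ‖gradient u x‖ ^ (p - 1) := fun x =>
    growth_upper hp2 (hac x) (h_diff x) (h_zero x) hΓ.le (h_upper x) _
  have hbl : ∀ x, γ / (p - 1) * ‖gradient u x‖ ^ p ≤ ⟪𝒜 x (gradient u x), gradient u x⟫ :=
    fun x => growth_lower hp2 (hac x) (h_diff x) (h_zero x) (h_lower x) _
  have hfc : IsCompact (f '' frontier K) :=
    (hK.of_isClosed_subset isClosed_frontier hK.isClosed.frontier_subset).image_of_continuousOn hf
  have hneg : ∀ v : EuclideanSpace ℝ (Fin n) → ℝ, ∀ x,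
      gradient (fun y => -v y) x = -gradient v x := fun v x => by
    simp [gradient, fderiv_fun_neg]
  have hweak_neg : ∀ ψ : EuclideanSpace ℝ (Fin n) → ℝ, (∃ c : ℝ≥0, LipschitzWith c ψ) →
      HasCompactSupport ψ → tsupport ψ ⊆ Kᶜ →
      ∫ x in Kᶜ, ⟪-𝒜 x (gradient u x), gradient ψ x⟫ = 0 := by
    intro ψ h1 h2 h3
    have h := hu_weak ψ h1 h2 h3
    simp only [inner_neg_left, integral_neg, h, neg_zero]
  intro x hx
  -- `upper_bound` needs a strict bound on `∂K`, hence the margin `ε`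
  constructor
  · refine le_of_forall_pos_le_add fun ε hε => ?_
    have := upper_bound (u := fun y => -u y) (b := fun x => -𝒜 x (gradient u x))
      (m := -sInf (f '' frontier K) + ε) hp2 hd hc hΓ hK.isClosed hKne hb.neg
      (fun x => by simpa only [hneg, norm_neg] using hbu x)
      (fun x => by simpa only [hneg, norm_neg, inner_neg_neg] using hbl x)
      (by simpa only [abs_neg] using hu_bdd) hu_cont.neg hu_diff.neg
      (by simpa only [hneg, norm_neg] using hu_loc)
      hweak_neg
      (fun y hy => by
        have := csInf_le hfc.bddBelow (mem_image_of_mem f hy)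
        rw [h_bd y hy]
        linarith) x hx
    linarith
  · refine le_of_forall_pos_le_add fun ε hε => ?_
    exact upper_bound (m := sSup (f '' frontier K) + ε) hp2 hd hc hΓ hK.isClosed hKne hb
      hbu hbl hu_bdd hu_cont hu_diff hu_loc hu_weak
      (fun y hy => by
        have := le_csSup hfc.bddAbove (mem_image_of_mem f hy)
        rw [h_bd y hy]
        linarith) x hx
end
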